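/- arXiv:1910.03411 — 6 statements merged into one kernel-verified Lean document; each statement's English description precedes it below -/
import Mathlib

section
/- Let f : ℝ → ℝ be smooth, let q ∈ ℕ and let φ ∈ 𝒜_q(ℝ). Then for every ε > 0 and every x ∈ ℝ the following Taylor expansion with integral remainder holds: ∫_ℝ f(y) φ_ε(y − x) dy = f(x) + (ε^{q+1}/q!) ∫_ℝ ∫_0^1 y^{q+1} (1 − t)^q f^{(q+1)}(x + tεy) φ(y) dt dy. -/
open MeasureTheory Filter Topology

noncomputable section

namespace Colombeau

/-- `φ ∈ 𝒟(ℝⁿ)`: smooth compactly supported function. -/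
def IsTestFunction (n : ℕ) (φ : (Fin n → ℝ) → ℝ) : Prop :=
  ContDiff ℝ (⊤ : ℕ∞) φ ∧ HasCompactSupport φ

/-- `φ ∈ 𝒜₀(ℝⁿ)`: test function with integral one. -/
def IsA0 (n : ℕ) (φ : (Fin n → ℝ) → ℝ) : Prop :=
  IsTestFunction n φ ∧ ∫ x, φ x = 1

/-- `φ ∈ 𝒜_q(ℝⁿ)`: vanishing moments up to order `q`. -/
def IsAq (n q : ℕ) (φ : (Fin n → ℝ) → ℝ) : Prop :=
  IsA0 n φ ∧ ∀ i : Fin n → ℕ, 1 ≤ ∑ j, i j → ∑ j, i j ≤ q →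
    ∫ x, (∏ j, x j ^ i j) * φ x = 0

/-- the scaled mollifier `φ_ε(x) = ε⁻ⁿ φ(x/ε)`. -/
def scaled (n : ℕ) (φ : (Fin n → ℝ) → ℝ) (ε : ℝ) : (Fin n → ℝ) → ℝ :=
  fun x => (ε ^ n)⁻¹ * φ (ε⁻¹ • x)

/-- partial derivative `∂_i`. -/
def partialD {n : ℕ} (i : Fin n) (f : (Fin n → ℝ) → ℝ) : (Fin n → ℝ) → ℝ :=
  fun x => fderiv ℝ f x (Pi.single i 1)

/-- multi-index derivative `∂^k = ∂₁^{k₁} ⋯ ∂_n^{k_n}`. -/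
def multiD {n : ℕ} (k : Fin n → ℕ) (f : (Fin n → ℝ) → ℝ) : (Fin n → ℝ) → ℝ :=
  (List.finRange n).foldl (fun g i => (partialD i)^[k i] g) f

/-- Moderate functions of the basic space. -/
def Moderate (n : ℕ) (F : ((Fin n → ℝ) → ℝ) → (Fin n → ℝ) → ℝ) : Prop :=
  ∀ K : Set (Fin n → ℝ), IsCompact K → ∀ k : Fin n → ℕ,
    ∃ N : ℕ, ∀ φ, IsAq n N φ →
      ∃ C > 0, ∀ᶠ ε in 𝓝[>] (0:ℝ), ∀ x ∈ K,
        |multiD k (F (scaled n φ ε)) x| ≤ C * ε ^ (-(N:ℤ))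

/-- Negligible functions of the basic space. -/
def Negligible (n : ℕ) (F : ((Fin n → ℝ) → ℝ) → (Fin n → ℝ) → ℝ) : Prop :=
  ∀ K : Set (Fin n → ℝ), IsCompact K → ∀ k : Fin n → ℕ, ∀ m : ℕ,
    ∃ q : ℕ, ∀ φ, IsAq n q φ →
      ∃ C > 0, ∀ᶠ ε in 𝓝[>] (0:ℝ), ∀ x ∈ K,
        |multiD k (F (scaled n φ ε)) x| ≤ C * ε ^ m


/-- `φ ∈ 𝒜_q(ℝ)` (one-dimensional version). -/
def IsAqOne (q : ℕ) (φ : ℝ → ℝ) : Prop :=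
  (ContDiff ℝ (⊤ : ℕ∞) φ ∧ HasCompactSupport φ) ∧ (∫ x, φ x = 1) ∧
    ∀ i : ℕ, 1 ≤ i → i ≤ q → ∫ x, x ^ i * φ x = 0

/-!
Substituting `y ↦ x + ε • y` turns the pairing with the rescaled mollifier into
`∫ y, φ y • f (x + ε • y)`. Expand `f (x + ε • y)` by Taylor's formula with integral remainder:
the Taylor polynomial contributes only its constant term `f x`, because `φ` has integral one and
is orthogonal to the homogeneous polynomials of degrees `1, …, q`.
-/

section Moments

variable {V F : Type*} [NormedAddCommGroup V] [NormedSpace ℝ V]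
  [NormedAddCommGroup F] [NormedSpace ℝ F]
  [MeasurableSpace V] {μ : Measure V} {φ : V → ℝ} {q : ℕ}

/-- Kernels of order `q`: the analogue of `𝒜_q` for a measure on a normed space, with finite
absolute moments in place of smoothness and compact support. The homogeneous polynomials of
degree `k` are encoded as the diagonals of continuous `k`-linear forms. -/
structure IsKernelOfOrder (μ : Measure V) (q : ℕ) (φ : V → ℝ) : Prop where
  integrable_mul_norm_pow : ∀ k ≤ q, Integrable (fun y => φ y * ‖y‖ ^ k) μ
  integral_eq_one : ∫ y, φ y ∂μ = 1
  integral_mul_diag_eq_zero : ∀ k, 1 ≤ k → k ≤ q → ∀ A : V [×k]→L[ℝ] ℝ,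
    ∫ y, φ y * A (fun _ => y) ∂μ = 0

namespace IsKernelOfOrder

theorem integrable (hφ : IsKernelOfOrder μ q φ) : Integrable φ μ := by
  simpa only [pow_zero, mul_one] using hφ.integrable_mul_norm_pow 0 q.zero_le

variable [OpensMeasurableSpace V] [SecondCountableTopology V]

theorem integrable_smul_diag (hφ : IsKernelOfOrder μ q φ) {k : ℕ} (hk : k ≤ q)
    (A : V [×k]→L[ℝ] F) : Integrable (fun y => φ y • A (fun _ => y)) μ := by
  have hA : Continuous fun y => A (fun _ => y) := by fun_prop
  refine ((hφ.integrable_mul_norm_pow k hk).norm.const_mul ‖A‖).mono'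
    (hφ.integrable.aestronglyMeasurable.smul hA.aestronglyMeasurable) (.of_forall fun y => ?_)
  calc ‖φ y • A (fun _ => y)‖ = ‖φ y‖ * ‖A (fun _ => y)‖ := norm_smul _ _
    _ ≤ ‖φ y‖ * (‖A‖ * ‖y‖ ^ k) := by
      gcongr
      simpa using A.le_opNorm (fun _ => y)
    _ = ‖A‖ * ‖φ y * ‖y‖ ^ k‖ := by
      rw [norm_mul, norm_pow, norm_norm]
      ring

variable [CompleteSpace F]

theorem integral_smul_diag_eq_zero (hφ : IsKernelOfOrder μ q φ) {k : ℕ} (hk : 1 ≤ k)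
    (hkq : k ≤ q) (A : V [×k]→L[ℝ] F) : ∫ y, φ y • A (fun _ => y) ∂μ = 0 := by
  refine SeparatingDual.eq_zero_of_forall_dual_eq_zero (R := ℝ) fun L => ?_
  rw [← L.integral_comp_comm (hφ.integrable_smul_diag hkq A)]
  simpa only [map_smul, smul_eq_mul, ContinuousLinearMap.compContinuousMultilinearMap_coe,
    Function.comp_apply] using
    hφ.integral_mul_diag_eq_zero k hk hkq (L.compContinuousMultilinearMap A)

theorem integral_smul_sum_diag (hφ : IsKernelOfOrder μ q φ) (A : ∀ k, V [×k]→L[ℝ] F) :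
    ∫ y, φ y • ∑ k ∈ Finset.range (q + 1), A k (fun _ => y) ∂μ = A 0 0 := by
  have hterm : ∀ k ∈ Finset.range (q + 1), Integrable (fun y => φ y • A k (fun _ => y)) μ :=
    fun k hk => hφ.integrable_smul_diag (Finset.mem_range_succ_iff.1 hk) (A k)
  have hpos : ∀ k ∈ Finset.range q, ∫ y, φ y • A (k + 1) (fun _ => y) ∂μ = 0 := fun k hk =>
    hφ.integral_smul_diag_eq_zero k.succ_pos (Finset.mem_range.1 hk) (A (k + 1))
  have hconst (y : V) : A 0 (fun _ => y) = A 0 0 := congrArg (A 0) (Subsingleton.elim _ _)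
  simp_rw [Finset.smul_sum]
  rw [integral_finsetSum _ hterm, Finset.sum_range_succ', Finset.sum_eq_zero hpos, zero_add]
  simp_rw [hconst]
  rw [integral_smul_const, hφ.integral_eq_one, one_smul]

end IsKernelOfOrder

end Moments

section Taylor

variable {V F : Type*} [NormedAddCommGroup V] [NormedSpace ℝ V]
  [NormedAddCommGroup F] [NormedSpace ℝ F] [CompleteSpace F] {f : V → F} {q : ℕ}

theorem map_add_smul_eq_sum_add_integral_iteratedFDeriv {x y : V} {ε : ℝ}
    (hf : ∀ t ∈ Set.Icc (0 : ℝ) 1, ContDiffAt ℝ (q + 1) f (x + t • ε • y)) :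
    f (x + ε • y) =
      ∑ k ∈ Finset.range (q + 1), (ε ^ k / k.factorial) • iteratedFDeriv ℝ k f x (fun _ => y) +
        (ε ^ (q + 1) / q.factorial) • ∫ t in (0 : ℝ)..1,
          (1 - t) ^ q • iteratedFDeriv ℝ (q + 1) f (x + (t * ε) • y) (fun _ => y) := by
  have hdiag (k : ℕ) (A : V [×k]→L[ℝ] F) : A (fun _ => ε • y) = ε ^ k • A (fun _ => y) := by
    simpa using A.map_smul_univ (fun _ => ε) (fun _ => y)
  rw [map_add_eq_sum_add_integral_iteratedFDeriv hf]
  simp_rw [hdiag, smul_comm _ (ε ^ (q + 1)), intervalIntegral.integral_smul, smul_smul,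
    div_eq_inv_mul]

variable [MeasurableSpace V] {μ : Measure V} {φ : V → ℝ}

theorem IsKernelOfOrder.integral_smul_comp_add_smul
    [OpensMeasurableSpace V] [SecondCountableTopology V]
    (hφ : IsKernelOfOrder μ q φ) (hf : ContDiff ℝ (q + 1) f) (x : V) (ε : ℝ)
    (hint : Integrable (fun y => φ y • f (x + ε • y)) μ) :
    ∫ y, φ y • f (x + ε • y) ∂μ = f x + (ε ^ (q + 1) / q.factorial) • ∫ y, φ y •
      (∫ t in (0 : ℝ)..1,
        (1 - t) ^ q • iteratedFDeriv ℝ (q + 1) f (x + (t * ε) • y) (fun _ => y)) ∂μ := by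
  let A (k : ℕ) : V [×k]→L[ℝ] F := (ε ^ k / k.factorial : ℝ) • iteratedFDeriv ℝ k f x
  have hA : A 0 0 = f x := by simp [A]
  have hpoly : Integrable (fun y => φ y • ∑ k ∈ Finset.range (q + 1), A k (fun _ => y)) μ := by
    simp_rw [Finset.smul_sum]
    exact integrable_finsetSum _ fun k hk =>
      hφ.integrable_smul_diag (Finset.mem_range_succ_iff.1 hk) (A k)
  rw [← hA, ← hφ.integral_smul_sum_diag A, ← sub_eq_iff_eq_add', ← integral_sub hint hpoly,
    ← integral_smul]
  congr 1 with y
  rw [map_add_smul_eq_sum_add_integral_iteratedFDeriv fun _ _ => hf.contDiffAt, ← smul_sub,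
    smul_comm _ (φ y)]
  exact congrArg _ (add_sub_cancel_left _ _)

end Taylor

section Rescaling

variable {V F : Type*} [NormedAddCommGroup V] [NormedSpace ℝ V] [FiniteDimensional ℝ V]
  [MeasurableSpace V] [BorelSpace V] (μ : Measure V) [μ.IsAddHaarMeasure]
  [NormedAddCommGroup F] [NormedSpace ℝ F]

theorem integral_rescaled_smul (φ : V → ℝ) (f : V → F) {ε : ℝ} (hε : ε ≠ 0) (x : V) :
    ∫ y, (|ε ^ Module.finrank ℝ V|⁻¹ * φ (ε⁻¹ • (y - x))) • f y ∂μ =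
      ∫ y, φ y • f (x + ε • y) ∂μ := by
  have hscale := Measure.integral_comp_inv_smul μ (fun y => φ y • f (x + ε • y)) ε
  have hpow : |ε ^ Module.finrank ℝ V| ≠ 0 := abs_ne_zero.2 (pow_ne_zero _ hε)
  rw [← integral_add_left_eq_self _ x]
  simp_rw [add_sub_cancel_left, mul_smul, integral_smul]
  rw [inv_smul_eq_iff₀ hpow, ← hscale]
  simp_rw [smul_inv_smul₀ hε]

theorem taylor_expansion_smoothing_general [CompleteSpace F] {f : V → F} {q : ℕ}
    (hf : ContDiff ℝ (q + 1) f) {φ : V → ℝ} (hφ : IsKernelOfOrder μ q φ) {ε : ℝ} (hε : ε ≠ 0)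
    (x : V) (hint : Integrable (fun y => φ y • f (x + ε • y)) μ) :
    ∫ y, (|ε ^ Module.finrank ℝ V|⁻¹ * φ (ε⁻¹ • (y - x))) • f y ∂μ =
      f x + (ε ^ (q + 1) / q.factorial) • ∫ y, φ y • (∫ t in (0 : ℝ)..1,
        (1 - t) ^ q • iteratedFDeriv ℝ (q + 1) f (x + (t * ε) • y) (fun _ => y)) ∂μ := by
  rw [integral_rescaled_smul μ φ f hε x, hφ.integral_smul_comp_add_smul hf x ε hint]

end Rescaling

namespace IsAqOne

variable {q : ℕ} {φ : ℝ → ℝ}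

theorem integrable_mul_continuous (hφ : IsAqOne q φ) {g : ℝ → ℝ} (hg : Continuous g) :
    Integrable fun y => φ y * g y :=
  (hφ.1.1.continuous.mul hg).integrable_of_hasCompactSupport hφ.1.2.mul_right

theorem isKernelOfOrder (hφ : IsAqOne q φ) : IsKernelOfOrder volume q φ where
  integrable_mul_norm_pow k _ := hφ.integrable_mul_continuous (by fun_prop)
  integral_eq_one := hφ.2.1
  integral_mul_diag_eq_zero k hk hkq A := by
    have hdiag (y : ℝ) : A (fun _ => y) = y ^ k * A 1 := by
      simpa using A.map_smul_univ (fun _ => y) 1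
    simp_rw [hdiag, ← mul_assoc, mul_comm (φ _)]
    rw [integral_mul_const, hφ.2.2 k hk hkq, zero_mul]

end IsAqOne

/-- Taylor expansion with integral remainder for the smoothing of a
smooth function against a mollifier with vanishing moments up to order `q`. -/
theorem taylor_expansion_smoothing (f : ℝ → ℝ) (hf : ContDiff ℝ (⊤ : ℕ∞) f) (q : ℕ)
    (φ : ℝ → ℝ) (hφ : IsAqOne q φ) (ε : ℝ) (hε : 0 < ε) (x : ℝ) :
    ∫ y, f y * (ε⁻¹ * φ (ε⁻¹ * (y - x))) =
      f x + (ε ^ (q + 1) / q.factorial) *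
        ∫ y, (∫ t in (0:ℝ)..1, y ^ (q + 1) * (1 - t) ^ q *
          iteratedDeriv (q + 1) f (x + t * ε * y)) * φ y := by
  have hexp := taylor_expansion_smoothing_general volume (hf.of_le (by exact_mod_cast le_top))
    hφ.isKernelOfOrder hε.ne' x (hφ.integrable_mul_continuous (by fun_prop))
  simpa [iteratedFDeriv_apply_eq_iteratedDeriv_mul_prod, abs_of_pos hε, mul_comm, mul_left_comm,
    mul_assoc] using hexp

end Colombeau
end
end

section
/- Let n ∈ ℕ, let f : ℝⁿ → ℝ be smooth, let q ∈ ℕ, let φ ∈ 𝒜_q(ℝⁿ) and let K ⊂ ℝⁿ be compact. Then sup_{x ∈ K} |∫_{ℝⁿ} f(y) φ_ε(y − x) dy − f(x)| = O(ε^{q+1}) as ε → 0⁺. -/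
open MeasureTheory Filter Topology

noncomputable section

namespace Colombeau

/-!
After the substitution `y = x + ε z` the smoothing of `f` at `x` is `∫ φ(z) f(x + ε z) dz`.
Replace `f(x + ε z)` by its Taylor polynomial of order `q` at `x`: the moment conditions annihilate
every homogeneous part of positive degree, so exactly `f(x)` remains. The Taylor remainder is at
most `C ‖ε z‖ ^ (q + 1)`, uniformly for `x ∈ K` and `z` in the compact support of `φ`.
-/

section Multilinear

variable {R M N ι κ : Type*} [CommSemiring R] [AddCommMonoid M] [Module R M] [AddCommMonoid N]
  [Module R N] [Fintype ι] [DecidableEq ι] [Fintype κ] [DecidableEq κ]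

theorem multilinearMap_diag_eq_sum_basis (L : MultilinearMap R (fun _ : ι => M) N)
    (b : Module.Basis κ R M) (x : M) :
    L (fun _ => x) =
      ∑ r : ι → κ, (∏ j, b.repr x j ^ Fintype.card {i // r i = j}) • L (fun i => b (r i)) := by
  conv_lhs => rw [← b.sum_repr x, L.map_sum]
  refine Finset.sum_congr rfl fun r _ => ?_
  rw [L.map_smul_univ, ← Finset.prod_fiberwise' Finset.univ r (b.repr x)]
  simp only [Finset.prod_const, Fintype.card_subtype]

end Multilinear

section Taylor

variable {E F : Type*} [NormedAddCommGroup E] [NormedSpace ℝ E] [NormedAddCommGroup F]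
  [NormedSpace ℝ F] {f : E → F} {q : ℕ} {x y : E}

/-- The Taylor polynomial of order `q` of `f` at `x`, as a function of the increment `y`. -/
def taylorPolynomial (q : ℕ) (f : E → F) (x y : E) : F :=
  ∑ k ∈ Finset.range (q + 1), (k.factorial : ℝ)⁻¹ • iteratedFDeriv ℝ k f x fun _ => y

theorem continuous_taylorPolynomial (q : ℕ) (f : E → F) (x : E) :
    Continuous (taylorPolynomial q f x) := by
  unfold taylorPolynomial
  fun_prop

theorem taylorPolynomial_zero (q : ℕ) (f : E → F) (x : E) : taylorPolynomial q f x 0 = f x := by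
  rw [taylorPolynomial, Finset.sum_range_succ', Finset.sum_eq_zero]
  · simp
  · intro k _
    exact smul_eq_zero_of_right _ (ContinuousMultilinearMap.map_zero _)

theorem norm_sub_taylorPolynomial_le [CompleteSpace F] {M : ℝ}
    (hf : ∀ t ∈ Set.Icc (0 : ℝ) 1, ContDiffAt ℝ (q + 1) f (x + t • y))
    (hM : ∀ t ∈ Set.Icc (0 : ℝ) 1, ‖iteratedFDeriv ℝ (q + 1) f (x + t • y)‖ ≤ M) :
    ‖f (x + y) - taylorPolynomial q f x y‖ ≤ M / (q + 1).factorial * ‖y‖ ^ (q + 1) := by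
  have integrand_le : ∀ t ∈ Set.Ioc (0 : ℝ) 1,
      ‖(1 - t) ^ q • iteratedFDeriv ℝ (q + 1) f (x + t • y) fun _ => y‖ ≤
        (1 - t) ^ q * (M * ‖y‖ ^ (q + 1)) := by
    intro t ht
    have weight_nonneg : 0 ≤ (1 - t) ^ q := pow_nonneg (sub_nonneg.2 ht.2) q
    rw [norm_smul, Real.norm_of_nonneg weight_nonneg]
    gcongr
    simpa using (iteratedFDeriv ℝ (q + 1) f (x + t • y)).le_of_opNorm_le
      (hM t (Set.Ioc_subset_Icc_self ht)) fun _ => y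
  have integral_weight : ∫ t in (0 : ℝ)..1, (1 - t) ^ q = ((q : ℝ) + 1)⁻¹ := by
    simp [intervalIntegral.integral_comp_sub_left fun t : ℝ => t ^ q]
  rw [map_add_eq_sum_add_integral_iteratedFDeriv hf, taylorPolynomial, add_sub_cancel_left,
    norm_smul, Real.norm_of_nonneg (by positivity)]
  calc
    _ ≤ (q.factorial : ℝ)⁻¹ * ∫ t in (0 : ℝ)..1, (1 - t) ^ q * (M * ‖y‖ ^ (q + 1)) := by
      gcongr
      exact intervalIntegral.norm_integral_le_of_norm_le zero_le_one
        (.of_forall integrand_le) (Continuous.intervalIntegrable (by fun_prop) 0 1)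
    _ = M / (q + 1).factorial * ‖y‖ ^ (q + 1) := by
      rw [intervalIntegral.integral_mul_const, integral_weight, Nat.factorial_succ]
      push_cast
      field_simp

open scoped Pointwise in
theorem exists_norm_sub_taylorPolynomial_le_of_isCompact [ProperSpace E] [CompleteSpace F]
    (hf : ContDiff ℝ (q + 1) f) {K : Set E} (hK : IsCompact K) (R : ℝ) :
    ∃ C ≥ 0, ∀ x ∈ K, ∀ y, ‖y‖ ≤ R →
      ‖f (x + y) - taylorPolynomial q f x y‖ ≤ C * ‖y‖ ^ (q + 1) := by
  obtain ⟨M, hM⟩ := (hK.add (isCompact_closedBall (0 : E) R)).exists_bound_of_continuousOn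
    (ContDiff.continuous_iteratedFDeriv' (m := q + 1) (mod_cast hf)).continuousOn
  refine ⟨max M 0 / (q + 1).factorial, by positivity, fun x hx y hy => ?_⟩
  refine norm_sub_taylorPolynomial_le (fun t _ => hf.contDiffAt) fun t ht => ?_
  have smul_mem : t • y ∈ Metric.closedBall (0 : E) R := by
    rw [mem_closedBall_zero_iff, norm_smul, Real.norm_of_nonneg ht.1]
    exact (mul_le_of_le_one_left (norm_nonneg y) ht.2).trans hy
  exact (hM _ (Set.add_mem_add hx smul_mem)).trans (le_max_left M 0)

end Taylor

section SMulIntegral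

variable {X 𝕜 F : Type*} [MeasurableSpace X] {μ : Measure X} [NormedRing 𝕜]
  [NormedAddCommGroup F] [Module 𝕜 F] [IsBoundedSMul 𝕜 F] {φ : X → 𝕜} {g : X → F}

theorem integrable_smul_of_hasCompactSupport [TopologicalSpace X] [OpensMeasurableSpace X]
    [T2Space X] [SecondCountableTopologyEither X F] (hφ : Integrable φ μ)
    (hφ_supp : HasCompactSupport φ) (hg : Continuous g) : Integrable (fun z => φ z • g z) μ :=
  (integrableOn_iff_integrable_of_support_subset
    ((Function.support_smul_subset_left φ g).trans (subset_tsupport φ))).1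
    (hφ.integrableOn.smul_continuousOn hg.continuousOn hφ_supp.isCompact)

theorem norm_integral_smul_le_of_forall_support [NormedSpace ℝ F] {M : ℝ} (hφ : Integrable φ μ)
    (hg : ∀ z ∈ Function.support φ, ‖g z‖ ≤ M) :
    ‖∫ z, φ z • g z ∂μ‖ ≤ M * ∫ z, ‖φ z‖ ∂μ := by
  rw [← integral_const_mul]
  refine norm_integral_le_of_norm_le (hφ.norm.const_mul M) (.of_forall fun z => ?_)
  by_cases hz : φ z = 0
  · simp [hz]
  · rw [mul_comm]
    exact (norm_smul_le _ _).trans (mul_le_mul_of_nonneg_left (hg z hz) (norm_nonneg _))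

end SMulIntegral

section Kernel

variable {E F : Type*} [NormedAddCommGroup E] [NormedSpace ℝ E] [MeasurableSpace E]
  [NormedAddCommGroup F] [NormedSpace ℝ F]
  {μ : Measure E} {φ : E → ℝ} {f : E → F} {q k : ℕ} {x : E} {ε : ℝ}

/-- The dilation `φ_ε(x) = ε^(-dim E) φ(x/ε)`, which preserves integrals; it is `scaled` on an
arbitrary finite-dimensional space. -/
def dilation (φ : E → ℝ) (ε : ℝ) (x : E) : ℝ :=
  (ε ^ Module.finrank ℝ E)⁻¹ * φ (ε⁻¹ • x)

theorem scaled_eq_dilation (n : ℕ) (φ : (Fin n → ℝ) → ℝ) : scaled n φ = dilation φ := by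
  ext ε x
  simp only [scaled, dilation, Module.finrank_fin_fun]

/-- Kernels of order `q`: integration against `φ` sends every polynomial of degree at most `q` to
its value at the origin. Polynomials are represented by their homogeneous parts, the diagonals of
multilinear forms `L`; degree `0` says that `φ` has integral one and the degrees `1, …, q` say that
its moments vanish. This is the coordinate-free form of `𝒜_q`, without smoothness. -/
structure IsKernelOfOrder_s3 (μ : Measure E) (q : ℕ) (φ : E → ℝ) : Prop where
  integrable : Integrable φ μ
  hasCompactSupport : HasCompactSupport φ
  integral_mul_diag : ∀ k ≤ q, ∀ L : E [×k]→L[ℝ] ℝ, ∫ z, φ z * L (fun _ => z) ∂μ = L 0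

theorem integral_dilation_sub_smul [BorelSpace E] [FiniteDimensional ℝ E] [μ.IsAddHaarMeasure]
    (φ : E → ℝ) (f : E → F) (x : E) (hε : 0 < ε) :
    ∫ y, dilation φ ε (y - x) • f y ∂μ = ∫ z, φ z • f (x + ε • z) ∂μ := by
  have hε_pow : ε ^ Module.finrank ℝ E ≠ 0 := (pow_pos hε _).ne'
  calc
    _ = ∫ z, dilation φ ε z • f (x + z) ∂μ := by
      rw [← integral_add_left_eq_self _ x]
      simp only [add_sub_cancel_left]
    _ = (ε ^ Module.finrank ℝ E)⁻¹ • ∫ z, φ (ε⁻¹ • z) • f (x + ε • ε⁻¹ • z) ∂μ := by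
      simp only [dilation, mul_smul, integral_smul, smul_inv_smul₀ hε.ne']
    _ = ∫ z, φ z • f (x + ε • z) ∂μ := by
      rw [Measure.integral_comp_inv_smul_of_nonneg μ (fun z => φ z • f (x + ε • z)) hε.le,
        inv_smul_smul₀ hε_pow]

namespace IsKernelOfOrder_s3

variable [OpensMeasurableSpace E] [SecondCountableTopologyEither E F]

theorem integrable_smul (hφ : IsKernelOfOrder_s3 μ q φ) (hf : Continuous f) :
    Integrable (fun z => φ z • f z) μ :=
  integrable_smul_of_hasCompactSupport hφ.integrable hφ.hasCompactSupport hf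

variable [CompleteSpace F]

theorem integral_smul_diag (hφ : IsKernelOfOrder_s3 μ q φ) (hk : k ≤ q) (L : E [×k]→L[ℝ] F) :
    ∫ z, φ z • L (fun _ => z) ∂μ = L 0 := by
  have integrable_diag : Integrable (fun z => φ z • L fun _ => z) μ :=
    hφ.integrable_smul (by fun_prop)
  rw [SeparatingDual.eq_iff_forall_dual_eq (R := ℝ)]
  intro ℓ
  simpa [← ℓ.integral_comp_comm integrable_diag] using
    hφ.integral_mul_diag k hk (ℓ.compContinuousMultilinearMap L)

theorem integral_smul_taylorPolynomial (hφ : IsKernelOfOrder_s3 μ q φ) (f : E → F) (x : E) (ε : ℝ) :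
    ∫ z, φ z • taylorPolynomial q f x (ε • z) ∂μ = f x := by
  let form (k : ℕ) : E [×k]→L[ℝ] F := ((k.factorial : ℝ)⁻¹ •
    iteratedFDeriv ℝ k f x).compContinuousLinearMap fun _ => ε • ContinuousLinearMap.id ℝ E
  have taylorPolynomial_smul (z : E) :
      taylorPolynomial q f x (ε • z) = ∑ k ∈ Finset.range (q + 1), form k fun _ => z := rfl
  calc
    _ = ∑ k ∈ Finset.range (q + 1), ∫ z, φ z • form k (fun _ => z) ∂μ := by
      simp_rw [taylorPolynomial_smul, Finset.smul_sum]
      exact integral_finsetSum _ fun k _ => hφ.integrable_smul (by fun_prop)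
    _ = ∑ k ∈ Finset.range (q + 1), form k fun _ => 0 :=
      Finset.sum_congr rfl fun k hk =>
        hφ.integral_smul_diag (Finset.mem_range_succ_iff.1 hk) (form k)
    _ = f x := by
      rw [← taylorPolynomial_smul, smul_zero, taylorPolynomial_zero]

theorem norm_integral_smul_sub_le (hφ : IsKernelOfOrder_s3 μ q φ) (hf : Continuous f) {C R : ℝ}
    (hC : 0 ≤ C) (hR : ∀ z ∈ tsupport φ, ‖z‖ ≤ R)
    (hremainder : ∀ y, ‖y‖ ≤ R → ‖f (x + y) - taylorPolynomial q f x y‖ ≤ C * ‖y‖ ^ (q + 1))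
    (hε : ε ∈ Set.Icc 0 1) :
    ‖∫ z, φ z • f (x + ε • z) ∂μ - f x‖ ≤ C * R ^ (q + 1) * (∫ z, ‖φ z‖ ∂μ) * ε ^ (q + 1) := by
  have remainder_le : ∀ z ∈ Function.support φ,
      ‖f (x + ε • z) - taylorPolynomial q f x (ε • z)‖ ≤ C * (ε * R) ^ (q + 1) := by
    intro z hz
    have hzR : ‖z‖ ≤ R := hR z (subset_tsupport φ hz)
    have norm_smul_le : ‖ε • z‖ ≤ ε * R := by
      rw [norm_smul, Real.norm_of_nonneg hε.1]
      exact mul_le_mul_of_nonneg_left hzR hε.1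
    have hεR : ε * R ≤ R := mul_le_of_le_one_left ((norm_nonneg z).trans hzR) hε.2
    exact (hremainder _ (norm_smul_le.trans hεR)).trans (by gcongr)
  have hT : Continuous (taylorPolynomial q f x) := continuous_taylorPolynomial q f x
  have integral_sub_eq : ∫ z, φ z • f (x + ε • z) ∂μ - f x =
      ∫ z, φ z • (f (x + ε • z) - taylorPolynomial q f x (ε • z)) ∂μ := by
    conv_lhs => rw [← hφ.integral_smul_taylorPolynomial f x ε]
    simp_rw [smul_sub]
    exact (integral_sub (hφ.integrable_smul (by fun_prop))
      (hφ.integrable_smul (by fun_prop))).symm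
  rw [integral_sub_eq]
  refine (norm_integral_smul_le_of_forall_support hφ.integrable remainder_le).trans_eq ?_
  ring

end IsKernelOfOrder_s3

theorem smoothing_eq_up_to_order_general [BorelSpace E] [FiniteDimensional ℝ E]
    [μ.IsAddHaarMeasure] [CompleteSpace F] (hf : ContDiff ℝ (q + 1) f)
    (hφ : IsKernelOfOrder_s3 μ q φ) {K : Set E} (hK : IsCompact K) :
    ∃ C > 0, ∀ᶠ ε in 𝓝[>] (0 : ℝ), ∀ x ∈ K,
      ‖∫ y, dilation φ ε (y - x) • f y ∂μ - f x‖ ≤ C * ε ^ (q + 1) := by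
  obtain ⟨R, R_pos, hR⟩ := hφ.hasCompactSupport.isCompact.isBounded.exists_pos_norm_le
  have : ProperSpace E := FiniteDimensional.proper_real E
  obtain ⟨C, C_nonneg, hC⟩ := exists_norm_sub_taylorPolynomial_le_of_isCompact hf hK R
  refine ⟨C * R ^ (q + 1) * (∫ z, ‖φ z‖ ∂μ) + 1, by positivity, ?_⟩
  filter_upwards [Ioc_mem_nhdsGT zero_lt_one] with ε hε x hx
  have ε_nonneg : 0 ≤ ε := hε.1.le
  rw [integral_dilation_sub_smul φ f x hε.1]
  refine (hφ.norm_integral_smul_sub_le hf.continuous C_nonneg hR (hC x hx)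
    (Set.Ioc_subset_Icc_self hε)).trans ?_
  gcongr
  exact le_add_of_nonneg_right zero_le_one

end Kernel

theorem IsAq.integral_mul_diag_eq_zero {n q k : ℕ} {φ : (Fin n → ℝ) → ℝ} (hφ : IsAq n q φ)
    (hk : 1 ≤ k) (hkq : k ≤ q) (L : (Fin n → ℝ) [×k]→L[ℝ] ℝ) :
    ∫ z, φ z * L (fun _ => z) = 0 := by
  obtain ⟨⟨⟨φ_smooth, φ_supp⟩, -⟩, moment_eq_zero⟩ := hφ
  let monomial (r : Fin k → Fin n) (z : Fin n → ℝ) : ℝ :=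
    ∏ j, z j ^ Fintype.card {i // r i = j}
  have integral_monomial (r : Fin k → Fin n) : ∫ z, monomial r z * φ z = 0 := by
    have degree_eq : ∑ j, Fintype.card {i // r i = j} = k := by
      rw [← Fintype.card_sigma, Fintype.card_congr (Equiv.sigmaFiberEquiv r), Fintype.card_fin]
    exact moment_eq_zero _ (by rwa [degree_eq]) (by rwa [degree_eq])
  have integrable_monomial (r : Fin k → Fin n) : Integrable fun z => monomial r z * φ z :=
    Continuous.integrable_of_hasCompactSupport (by fun_prop) φ_supp.mul_left
  have integrand_eq (z : Fin n → ℝ) : φ z * L (fun _ => z) =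
      ∑ r, monomial r z * φ z * L fun i => Pi.single (r i) 1 := by
    have diag_eq := multilinearMap_diag_eq_sum_basis L.toMultilinearMap (Pi.basisFun ℝ (Fin n)) z
    simp only [ContinuousMultilinearMap.coe_coe, Pi.basisFun_repr, Pi.basisFun_apply] at diag_eq
    rw [diag_eq, Finset.mul_sum]
    exact Finset.sum_congr rfl fun r _ => by rw [smul_eq_mul, ← mul_assoc, mul_comm (φ z)]
  simp_rw [integrand_eq]
  rw [integral_finsetSum _ fun r _ => (integrable_monomial r).mul_const _]
  simp only [integral_mul_const, integral_monomial, zero_mul, Finset.sum_const_zero]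

theorem IsAq.isKernelOfOrder {n q : ℕ} {φ : (Fin n → ℝ) → ℝ} (hφ : IsAq n q φ) :
    IsKernelOfOrder_s3 volume q φ where
  integrable := hφ.1.1.1.continuous.integrable_of_hasCompactSupport hφ.1.1.2
  hasCompactSupport := hφ.1.1.2
  integral_mul_diag
    | 0, _, L => by
      simp_rw [Subsingleton.elim (fun _ => _) (0 : Fin 0 → Fin n → ℝ)]
      rw [integral_mul_const, hφ.1.2, one_mul]
    | _ + 1, hk, L => by
      rw [L.map_zero, hφ.integral_mul_diag_eq_zero (Nat.succ_pos _) hk]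

/-- for a smooth `f` and `φ ∈ 𝒜_q(ℝⁿ)`, the smoothing of `f` agrees with
`f` up to `O(ε^{q+1})`, uniformly on compact sets. -/
theorem smoothing_eq_up_to_order (n : ℕ) (f : (Fin n → ℝ) → ℝ) (hf : ContDiff ℝ (⊤ : ℕ∞) f)
    (q : ℕ) (φ : (Fin n → ℝ) → ℝ) (hφ : IsAq n q φ)
    (K : Set (Fin n → ℝ)) (hK : IsCompact K) :
    ∃ C > 0, ∀ᶠ ε in 𝓝[>] (0:ℝ), ∀ x ∈ K,
      |(∫ y, f y * scaled n φ ε (y - x)) - f x| ≤ C * ε ^ (q + 1) := by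
  simpa [scaled_eq_dilation, mul_comm] using
    smoothing_eq_up_to_order_general (hf.of_le (mod_cast le_top)) hφ.isKernelOfOrder hK

end Colombeau
end
end

section
/- Let n ∈ ℕ and let f : ℝⁿ → ℝ be smooth. Then the difference between the two embeddings of f into the basic space is negligible; i.e., the map F(φ, x) := ∫_{ℝⁿ} f(y) φ(y − x) dy − f(x), defined for φ ∈ 𝒜₀(ℝⁿ) and x ∈ ℝⁿ, is negligible: for every compact K ⊂ ℝⁿ, every multi-index k and every m ∈ ℕ there is q ∈ ℕ such that for all φ ∈ 𝒜_q(ℝⁿ), sup_{x ∈ K} |∂_x^k F(φ_ε, x)| = O(ε^m) as ε → 0⁺. -/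
open MeasureTheory Filter Topology

noncomputable section

namespace Colombeau

/-!
Both embeddings commute with `∂ᵏ` (differentiate `∫ f (x + z) φ (z) dz` under the integral sign), so
it suffices to bound `∫ (g (x + z) - g x) φ_ε (z) dz` uniformly on compact sets for `g = ∂ᵏ f`.
Since `φ_ε ∈ 𝒜_q` whenever `φ ∈ 𝒜_q`, integrating the Taylor polynomial of degree `q` of `g` at `x`
against `φ_ε` gives exactly `g x`. What is left is the Taylor remainder on the support of `φ_ε`,
which is `O(ε ^ (q + 1))` because this support shrinks like `ε`, while the `L¹` norm of `φ_ε` does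
not depend on `ε`.
-/

section Calculus

variable {E F : Type*} [NormedAddCommGroup E] [NormedSpace ℝ E] [NormedAddCommGroup F]
  [NormedSpace ℝ F]

theorem hasFDerivAt_integral_smul_comp_add [ProperSpace E] [MeasurableSpace E] [BorelSpace E]
    {μ : Measure E} [IsFiniteMeasureOnCompacts μ] {ψ : E → ℝ} {g : E → F} (hψ : Continuous ψ)
    (hψc : HasCompactSupport ψ) (hg : ContDiff ℝ 1 g) (x : E) :
    HasFDerivAt (fun x => ∫ z, ψ z • g (x + z) ∂μ) (∫ z, ψ z • fderiv ℝ g (x + z) ∂μ) x := by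
  have hgc : Continuous g := hg.continuous
  have hg' : Continuous (fderiv ℝ g) := hg.continuous_fderiv one_ne_zero
  obtain ⟨M, hM⟩ := ((isCompact_closedBall x 1).prod hψc.isCompact).exists_bound_of_continuousOn
    (hg'.comp continuous_add).continuousOn
  have hbound : ∀ z, ∀ y ∈ Metric.closedBall x 1, ‖ψ z • fderiv ℝ g (y + z)‖ ≤ ‖ψ z‖ * M := by
    intro z y hy
    rw [norm_smul]
    by_cases hz : z ∈ tsupport ψ
    · gcongr
      exact hM (y, z) ⟨hy, hz⟩
    · simp [image_eq_zero_of_notMem_tsupport hz]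
  refine hasFDerivAt_integral_of_dominated_of_fderiv_le
    (F' := fun x z => ψ z • fderiv ℝ g (x + z)) (Metric.closedBall_mem_nhds x one_pos)
    (.of_forall fun y => Continuous.aestronglyMeasurable (by fun_prop))
    (Continuous.integrable_of_hasCompactSupport (by fun_prop) hψc.smul_right)
    (Continuous.aestronglyMeasurable (by fun_prop)) (.of_forall hbound)
    ((hψ.norm.integrable_of_hasCompactSupport hψc.norm).mul_const M)
    (.of_forall fun z y _ => ?_)
  exact ((hasFDerivAt_comp_add_right z).2
    (hg.differentiable one_ne_zero (y + z)).hasFDerivAt).const_smul (ψ z)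

/-- The Taylor series of `g` at `x`. Unlike in `ftaylorSeries`, the `j`-th term carries the factor
`1 / j!`, so that `(taylorSeriesAt g x).partialSum (m + 1)` is the Taylor polynomial of degree `m`
in the increment. -/
def taylorSeriesAt (g : E → F) (x : E) : FormalMultilinearSeries ℝ E F :=
  fun j => (j.factorial : ℝ)⁻¹ • iteratedFDeriv ℝ j g x

theorem norm_sub_partialSum_taylorSeriesAt_le [CompleteSpace F] {g : E → F} {m : ℕ}
    (hg : ContDiff ℝ (m + 1) g) {x y : E} {M : ℝ}
    (hM : ∀ t ∈ Set.Icc (0 : ℝ) 1, ‖iteratedFDeriv ℝ (m + 1) g (x + t • y)‖ ≤ M) :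
    ‖g (x + y) - (taylorSeriesAt g x).partialSum (m + 1) y‖
      ≤ M / (m + 1).factorial * ‖y‖ ^ (m + 1) := by
  have hremainder : g (x + y) - (taylorSeriesAt g x).partialSum (m + 1) y = (m.factorial : ℝ)⁻¹ •
      ∫ t in (0 : ℝ)..1, (1 - t) ^ m • iteratedFDeriv ℝ (m + 1) g (x + t • y) fun _ => y :=
    sub_eq_of_eq_add' (map_add_eq_sum_add_integral_iteratedFDeriv fun _ _ => hg.contDiffAt)
  have hintegrand : ∀ t ∈ Set.Ioc (0 : ℝ) 1,
      ‖(1 - t) ^ m • iteratedFDeriv ℝ (m + 1) g (x + t • y) fun _ => y‖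
        ≤ (1 - t) ^ m * (M * ‖y‖ ^ (m + 1)) := by
    intro t ht
    have ht' : 0 ≤ 1 - t := sub_nonneg.2 ht.2
    rw [norm_smul, Real.norm_of_nonneg (pow_nonneg ht' m)]
    gcongr
    calc ‖iteratedFDeriv ℝ (m + 1) g (x + t • y) fun _ => y‖
        ≤ ‖iteratedFDeriv ℝ (m + 1) g (x + t • y)‖ * ‖y‖ ^ (m + 1) := by
          simpa using (iteratedFDeriv ℝ (m + 1) g (x + t • y)).le_opNorm fun _ => y
      _ ≤ M * ‖y‖ ^ (m + 1) := by gcongr; exact hM t (Set.Ioc_subset_Icc_self ht)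
  have hweight : ∫ t in (0 : ℝ)..1, (1 - t) ^ m = ((m : ℝ) + 1)⁻¹ := by
    rw [intervalIntegral.integral_comp_sub_left (fun t : ℝ => t ^ m) 1, integral_pow]
    simp
  calc ‖g (x + y) - (taylorSeriesAt g x).partialSum (m + 1) y‖
      ≤ (m.factorial : ℝ)⁻¹ * ∫ t in (0 : ℝ)..1, (1 - t) ^ m * (M * ‖y‖ ^ (m + 1)) := by
        rw [hremainder, norm_smul, norm_inv, Real.norm_natCast]
        gcongr
        exact intervalIntegral.norm_integral_le_of_norm_le zero_le_one (.of_forall hintegrand)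
          (Continuous.intervalIntegrable (by fun_prop) _ _)
    _ = M / (m + 1).factorial * ‖y‖ ^ (m + 1) := by
        rw [intervalIntegral.integral_mul_const, hweight, Nat.factorial_succ]
        push_cast
        field_simp

theorem exists_norm_sub_partialSum_taylorSeriesAt_le [ProperSpace E] [CompleteSpace F] {g : E → F}
    {m : ℕ} (hg : ContDiff ℝ (m + 1) g) {K : Set E} (hK : IsCompact K) (R : ℝ) :
    ∃ C ≥ 0, ∀ x ∈ K, ∀ y ∈ Metric.closedBall (0 : E) R,
      ‖g (x + y) - (taylorSeriesAt g x).partialSum (m + 1) y‖ ≤ C * ‖y‖ ^ (m + 1) := by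
  have hD : Continuous (iteratedFDeriv ℝ (m + 1) g) :=
    hg.continuous_iteratedFDeriv (m := m + 1) (by norm_cast)
  obtain ⟨M, hM⟩ := (hK.prod (isCompact_closedBall (0 : E) R)).exists_bound_of_continuousOn
    (hD.comp continuous_add).continuousOn
  refine ⟨|M| / (m + 1).factorial, by positivity, fun x hx y hy =>
    norm_sub_partialSum_taylorSeriesAt_le hg fun t ht => ?_⟩
  have hty : t • y ∈ Metric.closedBall (0 : E) R := by
    rw [mem_closedBall_zero_iff] at hy ⊢
    rw [norm_smul, Real.norm_of_nonneg ht.1]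
    exact (mul_le_of_le_one_left (norm_nonneg y) ht.2).trans hy
  exact (hM (x, t • y) ⟨hx, hty⟩).trans (le_abs_self M)

end Calculus

theorem multilinearMap_diag_eq_sum_monomials {R M ι κ : Type*} [CommSemiring R] [AddCommMonoid M]
    [Module R M] [Fintype ι] [DecidableEq ι] [Fintype κ] [DecidableEq κ]
    (A : MultilinearMap R (fun _ : κ => ι → R) M) (z : ι → R) :
    A (fun _ => z) = ∑ r : κ → ι,
      (∏ i, z i ^ (Finset.univ.filter fun s => r s = i).card) •
        A fun s => Pi.single (r s) 1 := by
  have hz : z = ∑ i, z i • (Pi.single i 1 : ι → R) := pi_eq_sum_univ' z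
  conv_lhs => rw [hz, A.map_sum]
  refine Finset.sum_congr rfl fun r _ => ?_
  rw [A.map_smul_univ (fun s => z (r s)), ← Finset.prod_fiberwise' Finset.univ r z]
  simp only [Finset.prod_const]

section Moments

variable {n q : ℕ} {φ : (Fin n → ℝ) → ℝ} {F : Type*} [NormedAddCommGroup F] [NormedSpace ℝ F]

theorem IsTestFunction.integrable_smul (hφ : IsTestFunction n φ) {h : (Fin n → ℝ) → F}
    (hh : Continuous h) : Integrable fun z => φ z • h z :=
  (hφ.1.continuous.smul hh).integrable_of_hasCompactSupport hφ.2.smul_right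

variable [CompleteSpace F]

theorem IsAq.integral_smul_multilinear_eq_zero (hφ : IsAq n q φ) {j : ℕ} (hj : 1 ≤ j) (hjq : j ≤ q)
    (A : ContinuousMultilinearMap ℝ (fun _ : Fin j => Fin n → ℝ) F) :
    ∫ z, φ z • A (fun _ => z) = 0 := by
  have hexpand : ∀ z, φ z • A (fun _ => z) = ∑ r : Fin j → Fin n,
      ((∏ i, z i ^ (Finset.univ.filter fun s => r s = i).card) * φ z) •
        A fun s => Pi.single (r s) 1 := fun z => by
    have hA := multilinearMap_diag_eq_sum_monomials A.toMultilinearMap z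
    simp only [ContinuousMultilinearMap.coe_coe] at hA
    simp only [hA, Finset.smul_sum, smul_smul, mul_comm]
  have hdegree : ∀ r : Fin j → Fin n, ∑ i, (Finset.univ.filter fun s => r s = i).card = j :=
    fun r => by
      simpa using (Finset.card_eq_sum_card_fiberwise (f := r) (s := Finset.univ)
        (t := Finset.univ) (by simp)).symm
  simp_rw [hexpand]
  rw [integral_finsetSum]
  · refine Finset.sum_eq_zero fun r _ => ?_
    rw [integral_smul_const, hφ.2 _ (hj.trans_eq (hdegree r).symm) ((hdegree r).trans_le hjq),
      zero_smul]
  · intro r _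
    simpa only [smul_eq_mul, mul_comm] using (hφ.1.1.integrable_smul
      (h := fun z => ∏ i, z i ^ (Finset.univ.filter fun s => r s = i).card)
      (by fun_prop)).smul_const (A fun s => Pi.single (r s) 1)

theorem IsAq.integral_smul_partialSum (hφ : IsAq n q φ)
    (p : FormalMultilinearSeries ℝ (Fin n → ℝ) F) :
    ∫ z, φ z • p.partialSum (q + 1) z = p 0 0 := by
  have hconst : ∫ z, φ z • p 0 (fun _ => z) = p 0 0 := by
    simp only [Subsingleton.elim _ (0 : Fin 0 → Fin n → ℝ), integral_smul_const, hφ.1.2, one_smul]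
  simp only [FormalMultilinearSeries.partialSum, Finset.smul_sum]
  rw [integral_finsetSum _ fun j _ => hφ.1.1.integrable_smul (by fun_prop),
    Finset.sum_range_succ', hconst, Finset.sum_eq_zero, zero_add]
  exact fun j hj => hφ.integral_smul_multilinear_eq_zero (Nat.le_add_left 1 j)
    (Nat.succ_le_of_lt (Finset.mem_range.1 hj)) (p (j + 1))

end Moments

section Scaling

variable {n : ℕ} {φ : (Fin n → ℝ) → ℝ} {ε : ℝ}

theorem integral_scaled_smul {F : Type*} [NormedAddCommGroup F] [NormedSpace ℝ F] (hε : 0 < ε)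
    (φ : (Fin n → ℝ) → ℝ) (h : (Fin n → ℝ) → F) :
    ∫ z, scaled n φ ε z • h z = ∫ z, φ z • h (ε • z) := by
  have hsubst := Measure.integral_comp_inv_smul_of_nonneg (volume : Measure (Fin n → ℝ))
    (fun z => φ z • h (ε • z)) hε.le
  simp only [smul_inv_smul₀ hε.ne', Module.finrank_fin_fun] at hsubst
  simp only [scaled, mul_smul, integral_smul, hsubst, inv_smul_smul₀ (pow_pos hε n).ne']

theorem integral_norm_scaled (hε : 0 < ε) (φ : (Fin n → ℝ) → ℝ) :
    ∫ z, ‖scaled n φ ε z‖ = ∫ z, ‖φ z‖ := by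
  have hnorm : ∀ z, ‖scaled n φ ε z‖ = scaled n (fun z => ‖φ z‖) ε z := fun z => by
    rw [scaled, norm_mul, Real.norm_of_nonneg (by positivity), scaled]
  simpa only [hnorm, smul_eq_mul, mul_one] using
    integral_scaled_smul hε (fun z => ‖φ z‖) fun _ => (1 : ℝ)

theorem support_scaled_subset_closedBall (hε : 0 < ε) {R : ℝ}
    (hφ : Function.support φ ⊆ Metric.closedBall 0 R) :
    Function.support (scaled n φ ε) ⊆ Metric.closedBall 0 (ε * R) := by
  intro z hz
  have hR : ‖ε⁻¹ • z‖ ≤ R := mem_closedBall_zero_iff.1 (hφ (right_ne_zero_of_mul hz))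
  rw [norm_smul, norm_inv, Real.norm_of_nonneg hε.le, inv_mul_le_iff₀ hε] at hR
  exact mem_closedBall_zero_iff.2 hR

protected theorem IsTestFunction.scaled (hφ : IsTestFunction n φ) (hε : ε ≠ 0) :
    IsTestFunction n (scaled n φ ε) :=
  ⟨contDiff_const.mul (hφ.1.comp (contDiff_const_smul _)),
    (hφ.2.comp_smul (inv_ne_zero hε)).mul_left⟩

protected theorem IsAq.scaled {q : ℕ} (hφ : IsAq n q φ) (hε : 0 < ε) : IsAq n q (scaled n φ ε) := by
  refine ⟨⟨hφ.1.1.scaled hε.ne', ?_⟩, fun i hi hiq => ?_⟩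
  · simpa only [smul_eq_mul, mul_one, hφ.1.2] using integral_scaled_smul hε φ fun _ => (1 : ℝ)
  · calc ∫ z, (∏ j, z j ^ i j) * scaled n φ ε z
        = ∫ z, φ z • ∏ j, (ε • z) j ^ i j := by
          simpa only [smul_eq_mul, mul_comm] using
            integral_scaled_smul hε φ fun z => ∏ j, z j ^ i j
      _ = ∫ z, (∏ j, ε ^ i j) * ((∏ j, z j ^ i j) * φ z) := by
          simp only [Pi.smul_apply, smul_eq_mul, mul_pow, Finset.prod_mul_distrib, mul_comm,
            mul_left_comm]
      _ = 0 := by rw [integral_const_mul, hφ.2 i hi hiq, mul_zero]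

end Scaling

section MultiIndexDerivatives

variable {n : ℕ}

theorem multiD_rel {r : ((Fin n → ℝ) → ℝ) → ((Fin n → ℝ) → ℝ) → Prop}
    (hr : ∀ i g h, r g h → r (partialD i g) (partialD i h)) (k : Fin n → ℕ)
    {g h : (Fin n → ℝ) → ℝ} (hgh : r g h) : r (multiD k g) (multiD k h) := by
  refine List.foldl_rel hgh fun i _ g h hgh => ?_
  induction k i with
  | zero => exact hgh
  | succ j ih => simpa only [Function.iterate_succ_apply'] using hr i _ _ ih

theorem contDiff_partialD {g : (Fin n → ℝ) → ℝ} (hg : ContDiff ℝ (⊤ : ℕ∞) g) (i : Fin n) :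
    ContDiff ℝ (⊤ : ℕ∞) (partialD i g) :=
  (hg.fderiv_right (m := (⊤ : ℕ∞)) (by simp)).clm_apply contDiff_const

theorem contDiff_multiD {g : (Fin n → ℝ) → ℝ} (hg : ContDiff ℝ (⊤ : ℕ∞) g) (k : Fin n → ℕ) :
    ContDiff ℝ (⊤ : ℕ∞) (multiD k g) :=
  multiD_rel (r := fun g _ => ContDiff ℝ (⊤ : ℕ∞) g) (fun i _ _ hg => contDiff_partialD hg i) k
    (h := g) hg

end MultiIndexDerivatives

section EmbeddingDiff

variable {n q : ℕ} {g φ : (Fin n → ℝ) → ℝ} {x : Fin n → ℝ}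

/-- The difference `ι(g) - σ(g)` of the two embeddings of `g` into the basic space, as a function
of the mollifier `φ` and the point `x`. -/
def embeddingDiff (g φ : (Fin n → ℝ) → ℝ) : (Fin n → ℝ) → ℝ :=
  fun x => (∫ y, g y * φ (y - x)) - g x

theorem embeddingDiff_apply (g φ : (Fin n → ℝ) → ℝ) (x : Fin n → ℝ) :
    embeddingDiff g φ x = (∫ z, φ z • g (x + z)) - g x := by
  rw [embeddingDiff, ← integral_add_left_eq_self _ x]
  simp only [add_sub_cancel_left, smul_eq_mul, mul_comm]

theorem partialD_embeddingDiff (hg : ContDiff ℝ 1 g) (hφ : IsTestFunction n φ) (i : Fin n) :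
    partialD i (embeddingDiff g φ) = embeddingDiff (partialD i g) φ := by
  ext x
  have hg' : Continuous (fderiv ℝ g) := hg.continuous_fderiv one_ne_zero
  have hderiv : HasFDerivAt (embeddingDiff g φ)
      ((∫ z, φ z • fderiv ℝ g (x + z)) - fderiv ℝ g x) x := by
    rw [funext (embeddingDiff_apply g φ)]
    exact (hasFDerivAt_integral_smul_comp_add hφ.1.continuous hφ.2 hg x).sub
      (hg.differentiable one_ne_zero x).hasFDerivAt
  have hint : Integrable fun z => φ z • fderiv ℝ g (x + z) :=
    hφ.integrable_smul (hg'.comp (continuous_const_add x))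
  rw [partialD, hderiv.fderiv, embeddingDiff_apply, sub_apply,
    ContinuousLinearMap.integral_apply hint]
  rfl

theorem multiD_embeddingDiff (hg : ContDiff ℝ (⊤ : ℕ∞) g) (hφ : IsTestFunction n φ)
    (k : Fin n → ℕ) : multiD k (embeddingDiff g φ) = embeddingDiff (multiD k g) φ := by
  refine (multiD_rel (r := fun h g => ContDiff ℝ (⊤ : ℕ∞) g ∧ h = embeddingDiff g φ) ?_ k
    ⟨hg, rfl⟩).2
  rintro i _ g ⟨hg, rfl⟩
  exact ⟨contDiff_partialD hg i, partialD_embeddingDiff (hg.of_le (by simp)) hφ i⟩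

theorem IsAq.embeddingDiff_eq_integral (hφ : IsAq n q φ) (hg : Continuous g) (x : Fin n → ℝ) :
    embeddingDiff g φ x =
      ∫ z, φ z • (g (x + z) - (taylorSeriesAt g x).partialSum (q + 1) z) := by
  have hzero : taylorSeriesAt g x 0 0 = g x := by simp [taylorSeriesAt]
  rw [embeddingDiff_apply, ← hzero, ← hφ.integral_smul_partialSum, ← integral_sub
    (hφ.1.1.integrable_smul (by fun_prop))
    (hφ.1.1.integrable_smul (FormalMultilinearSeries.partialSum_continuous _ _))]
  simp only [smul_sub]

theorem IsAq.abs_embeddingDiff_le (hφ : IsAq n q φ) (hg : Continuous g) {B : ℝ}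
    (hB : ∀ z ∈ Function.support φ,
      ‖g (x + z) - (taylorSeriesAt g x).partialSum (q + 1) z‖ ≤ B) :
    |embeddingDiff g φ x| ≤ B * ∫ z, ‖φ z‖ := by
  have hφ_norm : Integrable fun z => ‖φ z‖ :=
    (hφ.1.1.1.continuous.integrable_of_hasCompactSupport hφ.1.1.2).norm
  rw [hφ.embeddingDiff_eq_integral hg, ← Real.norm_eq_abs, ← integral_const_mul]
  refine norm_integral_le_of_norm_le (hφ_norm.const_mul B) (.of_forall fun z => ?_)
  rw [norm_smul, mul_comm]
  by_cases hz : φ z = 0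
  · simp [hz]
  · gcongr
    exact hB z hz

theorem IsAq.exists_abs_embeddingDiff_scaled_le (hφ : IsAq n q φ) (hg : ContDiff ℝ (q + 1) g)
    {K : Set (Fin n → ℝ)} (hK : IsCompact K) :
    ∃ C > 0, ∀ ε ∈ Set.Ioc (0 : ℝ) 1, ∀ x ∈ K,
      |embeddingDiff g (scaled n φ ε) x| ≤ C * ε ^ (q + 1) := by
  obtain ⟨R, hR, hsupp⟩ := hφ.1.1.2.isCompact.isBounded.subset_closedBall_lt 0 0
  obtain ⟨C, hC, hTaylor⟩ := exists_norm_sub_partialSum_taylorSeriesAt_le hg hK R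
  refine ⟨C * R ^ (q + 1) * (∫ z, ‖φ z‖) + 1, by positivity, fun ε ⟨hε, hε1⟩ x hx => ?_⟩
  have hremainder : ∀ z ∈ Function.support (scaled n φ ε),
      ‖g (x + z) - (taylorSeriesAt g x).partialSum (q + 1) z‖ ≤ C * (ε * R) ^ (q + 1) := by
    intro z hz
    have hzε := support_scaled_subset_closedBall hε ((subset_tsupport φ).trans hsupp) hz
    have hzR := Metric.closedBall_subset_closedBall (mul_le_of_le_one_left hR.le hε1) hzε
    refine (hTaylor x hx z hzR).trans ?_
    gcongr
    exact mem_closedBall_zero_iff.1 hzε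
  calc |embeddingDiff g (scaled n φ ε) x|
      ≤ C * (ε * R) ^ (q + 1) * ∫ z, ‖φ z‖ := by
        rw [← integral_norm_scaled hε φ]
        exact (hφ.scaled hε).abs_embeddingDiff_le hg.continuous hremainder
    _ = C * R ^ (q + 1) * (∫ z, ‖φ z‖) * ε ^ (q + 1) := by ring
    _ ≤ (C * R ^ (q + 1) * (∫ z, ‖φ z‖) + 1) * ε ^ (q + 1) := by
        gcongr
        exact le_add_of_nonneg_right zero_le_one

end EmbeddingDiff

/-- for smooth `f`, the difference `ι(f) - σ(f)` of the two embeddings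
into the basic space is negligible. -/
theorem embeddings_of_smooth_coincide (n : ℕ) (f : (Fin n → ℝ) → ℝ)
    (hf : ContDiff ℝ (⊤ : ℕ∞) f) :
    Negligible n (fun φ x => (∫ y, f y * φ (y - x)) - f x) := by
  change Negligible n (embeddingDiff f)
  refine fun K hK k m => ⟨m, fun φ hφ => ?_⟩
  obtain ⟨C, hC, hbound⟩ := hφ.exists_abs_embeddingDiff_scaled_le
    ((contDiff_multiD hf k).of_le (by exact_mod_cast le_top)) hK
  refine ⟨C, hC, ?_⟩
  filter_upwards [Ioc_mem_nhdsGT zero_lt_one] with ε hε x hx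
  calc |multiD k (embeddingDiff f (scaled n φ ε)) x|
      = |embeddingDiff (multiD k f) (scaled n φ ε) x| := by
        rw [multiD_embeddingDiff hf (hφ.1.1.scaled hε.1.ne')]
    _ ≤ C * ε ^ (m + 1) := hbound ε hε x hx
    _ ≤ C * ε ^ m := by gcongr C * ?_; exact pow_le_pow_of_le_one hε.1.le hε.2 m.le_succ

end Colombeau
end
end

section
/- Let n ∈ ℕ, let f : ℝⁿ → ℝ be continuous, let φ ∈ 𝒟(ℝⁿ), let k and l be multi-indices and let K ⊂ ℝⁿ be compact. Then the smoothing of the distributional derivative ∂^l f satisfies the moderateness estimate sup_{x ∈ K} | ε^{−n−|l|−|k|} ∫_{ℝⁿ} f(y) (∂^{k+l} φ)((y − x)/ε) dy | = O(ε^{−|l|−|k|}) as ε → 0⁺. (Here ε^{−n−|l|−|k|} (∂^{k+l}φ)((y−x)/ε) is, up to sign, ∂_y^l ∂_x^k applied to the translated scaled mollifier φ_ε(y − x).) -/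
/-!
For `x` in the compact set `K` and `0 < ε ≤ ε₀`, the function `y ↦ ψ ((y - x) / ε)` with
`ψ = ∂^{k+l} φ` is supported in the fixed compact set `K + [0, ε₀] • supp ψ`, on which `f` is
essentially bounded by some `M`. Since rescaling multiplies the `L¹` norm by `ε ^ n`, the
integral is at most `M ‖ψ‖₁ ε ^ n`, and the factor `ε ^ n` cancels the normalisation of the
mollifier.
-/

open MeasureTheory Filter Topology

noncomputable section

namespace Colombeau

lemma memLp_top_restrict_of_isCompact {X F : Type*} [TopologicalSpace X] [T2Space X]
    [MeasurableSpace X] [OpensMeasurableSpace X] [NormedAddCommGroup F] {μ : Measure X}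
    {f : X → F} {K : Set X} (hf : ContinuousOn f K) (hK : IsCompact K) :
    MemLp f ⊤ (μ.restrict K) := by
  obtain ⟨M, hM⟩ := hK.exists_bound_of_continuousOn hf
  exact memLp_top_of_bound (hf.aestronglyMeasurable_of_isCompact hK hK.measurableSet) M
    (ae_restrict_of_forall_mem hK.measurableSet hM)

section Scaling

open Pointwise

variable {E F : Type*} [NormedAddCommGroup E] [NormedSpace ℝ E] [MeasurableSpace E]
  [BorelSpace E] [FiniteDimensional ℝ E] {μ : Measure E} [μ.IsAddHaarMeasure]
  [NormedAddCommGroup F] [NormedSpace ℝ F] {ψ : E → ℝ} {f : E → F}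

lemma integral_comp_inv_smul_sub (g : E → F) (ε : ℝ) (x : E) :
    ∫ y, g (ε⁻¹ • (y - x)) ∂μ = |ε ^ Module.finrank ℝ E| • ∫ z, g z ∂μ := by
  rw [integral_sub_right_eq_self (fun y => g (ε⁻¹ • y)) x, Measure.integral_comp_inv_smul]

lemma norm_integral_comp_inv_smul_sub_smul_le (hψ : Integrable ψ μ) {ε : ℝ} (hε : ε ≠ 0)
    {x : E} {M : ℝ} (hf : ∀ᵐ y ∂μ, ψ (ε⁻¹ • (y - x)) ≠ 0 → ‖f y‖ ≤ M) :
    ‖∫ y, ψ (ε⁻¹ • (y - x)) • f y ∂μ‖ ≤ (∫ z, ‖ψ z‖ ∂μ) * M * |ε| ^ Module.finrank ℝ E := by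
  have hint : Integrable (fun y => ‖ψ (ε⁻¹ • (y - x))‖ * M) μ :=
    ((hψ.comp_smul (inv_ne_zero hε)).comp_sub_right x).norm.mul_const M
  calc ‖∫ y, ψ (ε⁻¹ • (y - x)) • f y ∂μ‖
      ≤ ∫ y, ‖ψ (ε⁻¹ • (y - x))‖ * M ∂μ := by
        refine norm_integral_le_of_norm_le hint (hf.mono fun y hy => ?_)
        rw [norm_smul]
        by_cases h0 : ψ (ε⁻¹ • (y - x)) = 0
        · simp [h0]
        · gcongr
          exact hy h0
    _ = (∫ z, ‖ψ z‖ ∂μ) * M * |ε| ^ Module.finrank ℝ E := by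
        rw [integral_mul_const, integral_comp_inv_smul_sub (fun z => ‖ψ z‖), smul_eq_mul, abs_pow]
        ring

lemma exists_norm_integral_comp_inv_smul_sub_smul_le (hψ : Integrable ψ μ)
    (hψc : HasCompactSupport ψ) (hf : ∀ L, IsCompact L → MemLp f ⊤ (μ.restrict L))
    {K : Set E} (hK : IsCompact K) (ε₀ : ℝ) :
    ∃ C > 0, ∀ ε ∈ Set.Ioc 0 ε₀, ∀ x ∈ K,
      ‖∫ y, ψ (ε⁻¹ • (y - x)) • f y ∂μ‖ ≤ C * ε ^ Module.finrank ℝ E := by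
  have hL := hK.add ((isCompact_Icc (a := 0) (b := ε₀)).smul_set hψc.isCompact)
  set L := K + Set.Icc 0 ε₀ • tsupport ψ
  let M := lpNorm f ⊤ (μ.restrict L)
  have hM : ∀ᵐ y ∂μ, y ∈ L → ‖f y‖ ≤ M :=
    ae_imp_of_ae_restrict (ae_le_lpNorm_exponent_top (hf L hL))
  refine ⟨max ((∫ z, ‖ψ z‖ ∂μ) * M) 1, by positivity, fun ε hε x hx => ?_⟩
  have hbound : ∀ᵐ y ∂μ, ψ (ε⁻¹ • (y - x)) ≠ 0 → ‖f y‖ ≤ M := by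
    filter_upwards [hM] with y hy h0
    have hmem : x + ε • ε⁻¹ • (y - x) ∈ L := Set.add_mem_add hx <|
      Set.smul_mem_smul (Set.Ioc_subset_Icc_self hε) (subset_tsupport ψ h0)
    rw [smul_inv_smul₀ hε.1.ne', add_sub_cancel] at hmem
    exact hy hmem
  refine (norm_integral_comp_inv_smul_sub_smul_le hψ hε.1.ne' hbound).trans ?_
  rw [abs_of_pos hε.1]
  exact mul_le_mul_of_nonneg_right (le_max_left _ _) (pow_nonneg hε.1.le _)

end Scaling

section MultiIndex

variable {n : ℕ} {φ : (Fin n → ℝ) → ℝ}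

lemma contDiff_partialD_s8 {m : WithTop ℕ∞} (hφ : ContDiff ℝ (m + 1) φ) (i : Fin n) :
    ContDiff ℝ m (partialD i φ) :=
  (hφ.fderiv_right le_rfl).clm_apply contDiff_const

lemma contDiff_iterate_partialD {m : WithTop ℕ∞} (i : Fin n) (r : ℕ)
    (hφ : ContDiff ℝ (m + r) φ) : ContDiff ℝ m ((partialD i)^[r] φ) := by
  induction r generalizing φ with
  | zero => simpa using hφ
  | succ r ih => exact ih (contDiff_partialD_s8 (by simpa [add_assoc] using hφ) i)

lemma contDiff_multiD_s8 {m : WithTop ℕ∞} (k : Fin n → ℕ)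
    (hφ : ContDiff ℝ (m + (∑ j, k j : ℕ)) φ) : ContDiff ℝ m (multiD k φ) := by
  rw [Fin.sum_univ_def] at hφ
  unfold multiD
  generalize List.finRange n = is at hφ ⊢
  induction is generalizing φ with
  | nil => simpa using hφ
  | cons i is ih =>
    refine ih (contDiff_iterate_partialD i (k i) ?_)
    rwa [List.map_cons, List.sum_cons, add_comm (k i), Nat.cast_add, ← add_assoc] at hφ

lemma hasCompactSupport_partialD (hφ : HasCompactSupport φ) (i : Fin n) :
    HasCompactSupport (partialD i φ) :=
  hφ.fderiv_apply (𝕜 := ℝ) (Pi.single i 1)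

lemma hasCompactSupport_multiD (hφ : HasCompactSupport φ) (k : Fin n → ℕ) :
    HasCompactSupport (multiD k φ) :=
  List.foldlRecOn _ _ hφ fun _ hg i _ =>
    Function.Iterate.rec HasCompactSupport hg (fun _ h => hasCompactSupport_partialD h i) (k i)

end MultiIndex

theorem embedding_of_derivative_moderate_general {F : Type*} [NormedAddCommGroup F]
    [NormedSpace ℝ F] [CompleteSpace F] {n : ℕ} {f : (Fin n → ℝ) → F}
    (hf : ∀ L, IsCompact L → MemLp f ⊤ (volume.restrict L)) {φ : (Fin n → ℝ) → ℝ}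
    (k l : Fin n → ℕ) (hφ : ContDiff ℝ (∑ j, (k + l) j : ℕ) φ) (hφc : HasCompactSupport φ)
    {K : Set (Fin n → ℝ)} (hK : IsCompact K) (ε₀ : ℝ) :
    ∃ C > 0, ∀ ε ∈ Set.Ioc 0 ε₀, ∀ x ∈ K,
      ‖(ε ^ (n + (∑ j, l j) + (∑ j, k j)))⁻¹ •
          ∫ y, multiD (k + l) φ (ε⁻¹ • (y - x)) • f y‖ ≤
        C * ε ^ (-(((∑ j, l j) + (∑ j, k j) : ℕ) : ℤ)) := by
  have hψ : Continuous (multiD (k + l) φ) :=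
    (contDiff_multiD_s8 (m := 0) (k + l) (by rwa [zero_add])).continuous
  have hψc := hasCompactSupport_multiD hφc (k + l)
  obtain ⟨C, hC, hbound⟩ := exists_norm_integral_comp_inv_smul_sub_smul_le
    (hψ.integrable_of_hasCompactSupport hψc) hψc hf hK ε₀
  refine ⟨C, hC, fun ε hε x hx => ?_⟩
  have hpos : 0 < ε := hε.1
  rw [Module.finrank_fin_fun] at hbound
  rw [norm_smul, Real.norm_of_nonneg (by positivity)]
  calc (ε ^ (n + (∑ j, l j) + (∑ j, k j)))⁻¹ * ‖∫ y, multiD (k + l) φ (ε⁻¹ • (y - x)) • f y‖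
      ≤ (ε ^ (n + (∑ j, l j) + (∑ j, k j)))⁻¹ * (C * ε ^ n) := by
        gcongr
        exact hbound ε hε x hx
    _ = C * ε ^ (-(((∑ j, l j) + (∑ j, k j) : ℕ) : ℤ)) := by
        rw [zpow_neg, zpow_natCast, add_assoc, pow_add]
        field_simp

/-- moderateness estimate for the smoothing of the distributional
derivative `∂^l f` of a continuous function `f`. -/
theorem embedding_of_derivative_moderate (n : ℕ) (f : (Fin n → ℝ) → ℝ)
    (hf : Continuous f) (φ : (Fin n → ℝ) → ℝ) (hφ : IsTestFunction n φ)
    (k l : Fin n → ℕ) (K : Set (Fin n → ℝ)) (hK : IsCompact K) :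
    ∃ C > 0, ∀ᶠ ε in 𝓝[>] (0:ℝ), ∀ x ∈ K,
      |(ε ^ (n + (∑ j, l j) + (∑ j, k j)))⁻¹ *
          ∫ y, f y * multiD (k + l) φ (ε⁻¹ • (y - x))| ≤
        C * ε ^ (-(((∑ j, l j) + (∑ j, k j) : ℕ) : ℤ)) := by
  obtain ⟨C, hC, hbound⟩ := embedding_of_derivative_moderate_general
    (fun _ => memLp_top_restrict_of_isCompact hf.continuousOn) k l
    (hφ.1.of_le (mod_cast le_top)) hφ.2 hK 1
  refine ⟨C, hC, ?_⟩
  filter_upwards [Ioc_mem_nhdsGT one_pos] with ε hε x hx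
  simpa only [smul_eq_mul, Real.norm_eq_abs, mul_comm (f _)] using hbound ε hε x hx

end Colombeau
end
end

section
/- Let n ∈ ℕ, let f : ℝⁿ → ℝ be smooth, let u : ℝⁿ → ℝ be locally integrable and let φ ∈ 𝒜₀(ℝⁿ). Then for every Ψ ∈ 𝒟(ℝⁿ), lim_{ε → 0⁺} ∫_{ℝⁿ} f̃(φ_ε, x) ũ(φ_ε, x) Ψ(x) dx = ∫_{ℝⁿ} f(x) u(x) Ψ(x) dx; that is, the product of the embedding of a smooth function and the embedding of the regular distribution u is associated to the embedding of the product f·u. -/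
open MeasureTheory Filter Topology

noncomputable section

namespace Colombeau

/-!
Substituting `y = x + ε • z` turns `f̃(φ_ε, x)` into `∫ z, f (x + ε • z) * φ z`, which makes sense
for every real `ε` and equals `f x` at `ε = 0`. By translation invariance, the adjoint of
mollification at scale `ε` is mollification at scale `-ε`. Hence the mollifier can be moved from the
locally integrable `u` to the continuous, compactly supported function `f̃(φ_ε, ·) Ψ`, whose
mollification is jointly continuous and supported in a compact set that can be chosen locally
uniformly in `ε`. The integral is thus continuous in `ε`, and its value at `ε = 0` is the limit.
-/

open Function Module
open scoped Pointwise

section Mollify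

variable {E : Type*} [AddCommGroup E] [Module ℝ E] {φ g : E → ℝ}

lemma mul_eq_zero_of_notMem_sub_smul {K S : Set E} (hg : support g ⊆ K) (hφ : support φ ⊆ S)
    {I : Set ℝ} {ε : ℝ} (hε : ε ∈ I) {x : E} (hx : x ∉ K - I • S) (z : E) :
    g (x + ε • z) * φ z = 0 := by
  contrapose! hx
  obtain ⟨hgx, hφz⟩ := mul_ne_zero_iff.mp hx
  exact ⟨x + ε • z, hg hgx, ε • z, Set.smul_mem_smul hε (hφ hφz), add_sub_cancel_right x (ε • z)⟩

variable [MeasurableSpace E]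

/-- The mollification of `f` by `φ` at scale `ε`. For `0 < ε` this is the embedding `f̃(φ_ε, x)`
after the substitution `y = x + ε • z`; in this form the scale may be any real number. -/
def mollify (μ : Measure E) (φ f : E → ℝ) (ε : ℝ) (x : E) : ℝ :=
  ∫ z, f (x + ε • z) * φ z ∂μ

variable {μ : Measure E}

lemma mollify_zero (hφ : ∫ z, φ z ∂μ = 1) (f : E → ℝ) (x : E) : mollify μ φ f 0 x = f x := by
  simp only [mollify, zero_smul, add_zero, integral_const_mul, hφ, mul_one]

lemma mollify_eq_zero_of_notMem_sub_smul {K S : Set E} (hg : support g ⊆ K) (hφ : support φ ⊆ S)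
    {I : Set ℝ} {ε : ℝ} (hε : ε ∈ I) {x : E} (hx : x ∉ K - I • S) : mollify μ φ g ε x = 0 :=
  integral_eq_zero_of_ae (ae_of_all μ (mul_eq_zero_of_notMem_sub_smul hg hφ hε hx))

end Mollify

section ProperSpace

lemma isCompact_sub_smul {E : Type*} [AddCommGroup E] [Module ℝ E] [TopologicalSpace E]
    [IsTopologicalAddGroup E] [ContinuousSMul ℝ E] {K S : Set E} {I : Set ℝ} (hK : IsCompact K)
    (hI : IsCompact I) (hS : IsCompact S) : IsCompact (K - I • S) := by
  simpa only [sub_eq_add_neg] using hK.add (hI.smul_set hS).neg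

lemma continuous_integral_mul_of_hasCompactSupport {X Y : Type*} [TopologicalSpace X]
    [TopologicalSpace Y] [R1Space Y] [LocallyCompactSpace Y] [MeasurableSpace Y]
    [OpensMeasurableSpace Y] {μ : Measure Y} {φ : Y → ℝ} (hφ : LocallyIntegrable φ μ)
    (hφc : HasCompactSupport φ) {h : X → Y → ℝ} (hh : Continuous ↿h) :
    Continuous fun p => ∫ z, h p z * φ z ∂μ := by
  -- A cutoff `χ = 1` on the support of `φ` makes the continuous factor compactly supported.
  obtain ⟨χ, hχ_one, hχ_compact, -, -⟩ :=
    exists_continuousMap_one_of_isCompact_subset_isOpen hφc.isCompact isOpen_univ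
      (Set.subset_univ _)
  have cutoff (p : X) (z : Y) : h p z * φ z = φ z * (χ z * h p z) := by
    by_cases hz : z ∈ tsupport φ
    · rw [hχ_one hz, Pi.one_apply, one_mul, mul_comm]
    · simp only [image_eq_zero_of_notMem_tsupport hz, mul_zero, zero_mul]
  simp only [cutoff, ← continuousOn_univ]
  refine continuousOn_integral_bilinear_of_locally_integrable_of_compact_support
    (ContinuousLinearMap.mul ℝ ℝ) hχ_compact
    (f := fun p z => χ z * h p z) ((χ.continuous.comp continuous_snd).mul hh).continuousOn
    (fun p z _ hz => ?_) (hφ.integrableOn_isCompact hχ_compact)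
  rw [image_eq_zero_of_notMem_tsupport hz, zero_mul]

variable {E : Type*} [NormedAddCommGroup E] [NormedSpace ℝ E] [ProperSpace E]
  [MeasurableSpace E] [BorelSpace E] {μ : Measure E} {φ : E → ℝ}

lemma continuous_mollify {X : Type*} [TopologicalSpace X] (hφ : LocallyIntegrable φ μ)
    (hφc : HasCompactSupport φ) {g : X → E → ℝ} (hg : Continuous ↿g) {ε : X → ℝ}
    (hε : Continuous ε) {x : X → E} (hx : Continuous x) :
    Continuous fun p => mollify μ φ (g p) (ε p) (x p) :=
  continuous_integral_mul_of_hasCompactSupport hφ hφc (h := fun p z => g p (x p + ε p • z))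
    (hg.comp (by fun_prop : Continuous fun q : X × E => (q.1, x q.1 + ε q.1 • q.2)))

lemma continuous_integral_mul_mollify {X : Type*} [TopologicalSpace X] [WeaklyLocallyCompactSpace X]
    {u : E → ℝ} (hu : LocallyIntegrable u μ) (hφ : LocallyIntegrable φ μ)
    (hφc : HasCompactSupport φ) {g : X → E → ℝ} (hg : Continuous ↿g) {K : Set E} (hK : IsCompact K)
    (hgK : ∀ p, support (g p) ⊆ K) {ε : X → ℝ} (hε : Continuous ε) :
    Continuous fun p => ∫ y, u y * mollify μ φ (g p) (ε p) y ∂μ := by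
  refine continuous_iff_continuousAt.mpr fun p₀ => ?_
  obtain ⟨V, hV, hV_nhds⟩ := exists_compact_mem_nhds p₀
  have hL : IsCompact (K - ε '' V • tsupport φ) :=
    isCompact_sub_smul hK (hV.image hε) hφc.isCompact
  have hcont : Continuous ↿fun p y => mollify μ φ (g p) (ε p) y :=
    continuous_mollify hφ hφc (X := X × E) (g := fun q => g q.1)
      (hg.comp (by fun_prop : Continuous fun q : (X × E) × E => (q.1.1, q.2)))
      (hε.comp continuous_fst) continuous_snd
  have hcontOn := continuousOn_integral_bilinear_of_locally_integrable_of_compact_support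
    (ContinuousLinearMap.mul ℝ ℝ) hL hcont.continuousOn
    (fun p y hp hy => mollify_eq_zero_of_notMem_sub_smul (hgK p) (subset_tsupport φ)
      (Set.mem_image_of_mem ε hp) hy)
    (hu.integrableOn_isCompact hL)
  exact hcontOn.continuousAt hV_nhds

lemma integrable_prod_mul_comp_add_smul {u g : E → ℝ} (hu : LocallyIntegrable u μ)
    (hφ : Integrable φ μ) (hφc : HasCompactSupport φ) (hg : Continuous g)
    (hgc : HasCompactSupport g) (ε : ℝ) :
    Integrable (fun p : E × E => u p.2 * (g (p.2 + ε • p.1) * φ p.1)) (μ.prod μ) := by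
  set L := tsupport g - ({ε} : Set ℝ) • tsupport φ
  have hL : IsCompact L := isCompact_sub_smul hgc.isCompact isCompact_singleton hφc.isCompact
  have huL : Integrable (L.indicator u) μ :=
    (hu.integrableOn_isCompact hL).integrable_indicator hL.measurableSet
  obtain ⟨C, hC⟩ := hgc.exists_bound_of_continuous hg
  have hcont : Continuous fun p : E × E => g (p.2 + ε • p.1) := by fun_prop
  refine ((hφ.mul_prod huL).bdd_mul hcont.aestronglyMeasurable
    (ae_of_all _ fun p => hC (p.2 + ε • p.1))).congr (ae_of_all _ fun ⟨z, y⟩ => ?_)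
  by_cases hy : y ∈ L
  · simp only [Set.indicator_of_mem hy]
    ring
  · simp only [Set.indicator_of_notMem hy, mul_zero, mul_eq_zero_of_notMem_sub_smul
      (subset_tsupport g) (subset_tsupport φ) (Set.mem_singleton ε) hy z]

end ProperSpace

section Haar

variable {E : Type*} [NormedAddCommGroup E] [NormedSpace ℝ E] [FiniteDimensional ℝ E]
  [MeasurableSpace E] [BorelSpace E] {μ : Measure E} [μ.IsAddHaarMeasure] {u φ : E → ℝ}

lemma integral_mul_dilation_sub_eq_mollify (f φ : E → ℝ) {ε : ℝ} (hε : 0 < ε) (x : E) :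
    ∫ y, f y * ((ε ^ finrank ℝ E)⁻¹ * φ (ε⁻¹ • (y - x))) ∂μ = mollify μ φ f ε x := by
  have hpow : ε ^ finrank ℝ E ≠ 0 := pow_ne_zero _ hε.ne'
  calc ∫ y, f y * ((ε ^ finrank ℝ E)⁻¹ * φ (ε⁻¹ • (y - x))) ∂μ
      = (ε ^ finrank ℝ E)⁻¹ * ∫ y, f y * φ (ε⁻¹ • (y - x)) ∂μ := by
        rw [← integral_const_mul]
        simp only [mul_left_comm]
    _ = (ε ^ finrank ℝ E)⁻¹ * ∫ w, f (x + ε • ε⁻¹ • w) * φ (ε⁻¹ • w) ∂μ := by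
        rw [← integral_add_left_eq_self _ x]
        simp only [add_sub_cancel_left, smul_inv_smul₀ hε.ne']
    _ = mollify μ φ f ε x := by
        rw [Measure.integral_comp_inv_smul_of_nonneg μ (fun z => f (x + ε • z) * φ z) hε.le,
          smul_eq_mul, inv_mul_cancel_left₀ hpow, mollify]

lemma measurePreserving_prod_add_smul (ε : ℝ) :
    MeasurePreserving (fun p : E × E => (p.1, p.2 + ε • p.1)) (μ.prod μ) (μ.prod μ) :=
  (MeasurePreserving.id μ).skew_product (g := fun z x => x + ε • z) (by fun_prop)
    (ae_of_all μ fun z => map_add_right_eq_self μ (ε • z))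

lemma integral_mul_mollify_comm {g : E → ℝ} (hu : LocallyIntegrable u μ)
    (hφ : Integrable φ μ) (hφc : HasCompactSupport φ) (hg : Continuous g)
    (hgc : HasCompactSupport g) (ε : ℝ) :
    ∫ x, g x * mollify μ φ u ε x ∂μ = ∫ y, u y * mollify μ φ g (-ε) y ∂μ := by
  have hint := integrable_prod_mul_comp_add_smul hu hφ hφc hg hgc (-ε)
  have hint_shear : Integrable (fun p : E × E => u (p.2 + ε • p.1) * (g p.2 * φ p.1))
      (μ.prod μ) := by
    simpa [comp_def] using (measurePreserving_prod_add_smul ε).integrable_comp_of_integrable hint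
  calc ∫ x, g x * mollify μ φ u ε x ∂μ
      = ∫ x, ∫ z, u (x + ε • z) * (g x * φ z) ∂μ ∂μ := by
        simp only [mollify, ← integral_const_mul, mul_left_comm]
    _ = ∫ z, ∫ x, u (x + ε • z) * (g x * φ z) ∂μ ∂μ :=
        (integral_integral_swap hint_shear).symm
    _ = ∫ z, ∫ y, u y * (g (y + -ε • z) * φ z) ∂μ ∂μ := by
        congr! 2 with z
        rw [← integral_add_right_eq_self (fun y => u y * (g (y + -ε • z) * φ z)) (ε • z)]
        simp only [neg_smul, add_neg_cancel_right]
    _ = ∫ y, u y * mollify μ φ g (-ε) y ∂μ := by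
        rw [integral_integral_swap (f := fun z y => u y * (g (y + -ε • z) * φ z)) hint]
        simp only [mollify, integral_const_mul]

lemma continuous_integral_mollify_mul_mollify_mul {f Ψ : E → ℝ} (hf : Continuous f)
    (hu : LocallyIntegrable u μ) (hφ : Integrable φ μ) (hφc : HasCompactSupport φ)
    (hΨ : Continuous Ψ) (hΨc : HasCompactSupport Ψ) :
    Continuous fun ε => ∫ x, mollify μ φ f ε x * mollify μ φ u ε x * Ψ x ∂μ := by
  set g : ℝ → E → ℝ := fun ε x => mollify μ φ f ε x * Ψ x
  have hg : Continuous ↿g :=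
    (continuous_mollify hφ.locallyIntegrable hφc (hf.comp continuous_snd) continuous_fst
      continuous_snd).mul (hΨ.comp continuous_snd)
  have hg_support (ε : ℝ) : support (g ε) ⊆ tsupport Ψ :=
    (support_mul_subset_right _ Ψ).trans (subset_tsupport Ψ)
  have move_mollifier (ε : ℝ) : ∫ x, mollify μ φ f ε x * mollify μ φ u ε x * Ψ x ∂μ =
      ∫ y, u y * mollify μ φ (g ε) (-ε) y ∂μ := by
    rw [← integral_mul_mollify_comm hu hφ hφc (hg.uncurry_left ε) hΨc.mul_left]
    simp only [g, mul_right_comm]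
  simpa only [move_mollifier] using continuous_integral_mul_mollify hu hφ.locallyIntegrable hφc hg
    hΨc.isCompact hg_support continuous_neg

theorem smooth_times_distribution_associated_general {f Ψ : E → ℝ} (hf : Continuous f)
    (hu : LocallyIntegrable u μ) (hφ : Integrable φ μ) (hφc : HasCompactSupport φ)
    (hφ_one : ∫ z, φ z ∂μ = 1) (hΨ : Continuous Ψ) (hΨc : HasCompactSupport Ψ) :
    Tendsto (fun ε : ℝ => ∫ x,
        (∫ y, f y * ((ε ^ finrank ℝ E)⁻¹ * φ (ε⁻¹ • (y - x))) ∂μ) *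
        (∫ y, u y * ((ε ^ finrank ℝ E)⁻¹ * φ (ε⁻¹ • (y - x))) ∂μ) * Ψ x ∂μ)
      (𝓝[>] 0) (𝓝 (∫ x, f x * u x * Ψ x ∂μ)) := by
  have hlim := (continuous_integral_mollify_mul_mollify_mul hf hu hφ hφc hΨ hΨc).tendsto 0
  simp only [mollify_zero hφ_one] at hlim
  refine (hlim.mono_left nhdsWithin_le_nhds).congr' ?_
  filter_upwards [self_mem_nhdsWithin] with ε hε
  simp only [integral_mul_dilation_sub_eq_mollify _ _ hε]

end Haar

/-- the product of the embedding of a smooth function and the embedding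
of a regular distribution is associated to the embedding of their product. -/
theorem smooth_times_distribution_associated (n : ℕ) (f u : (Fin n → ℝ) → ℝ)
    (hf : ContDiff ℝ (⊤ : ℕ∞) f) (hu : LocallyIntegrable u)
    (φ : (Fin n → ℝ) → ℝ) (hφ : IsA0 n φ)
    (Ψ : (Fin n → ℝ) → ℝ) (hΨ : IsTestFunction n Ψ) :
    Tendsto (fun ε : ℝ => ∫ x, (∫ y, f y * scaled n φ ε (y - x)) *
        (∫ y, u y * scaled n φ ε (y - x)) * Ψ x)
      (𝓝[>] 0) (𝓝 (∫ x, f x * u x * Ψ x)) := by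
  simpa only [scaled, finrank_fin_fun] using
    smooth_times_distribution_associated_general hf.continuous hu
      (hφ.1.1.continuous.integrable_of_hasCompactSupport hφ.1.2) hφ.1.2 hφ.2
      hΨ.1.continuous hΨ.2

end Colombeau
end
end

section
/- Let n ∈ ℕ, let u : ℝⁿ → ℝ be locally integrable, let X : ℝⁿ → ℝⁿ be a smooth vector field and let φ ∈ 𝒜₀(ℝⁿ). Then for every Ψ ∈ 𝒟(ℝⁿ), lim_{ε → 0⁺} ∫_{ℝⁿ} ( Σ_{a=1}^n X_a(x) ∂_{x_a} ũ(φ_ε, x) ) Ψ(x) dx = − ∫_{ℝⁿ} u(x) Σ_{a=1}^n ∂_a (X_a Ψ)(x) dx; that is, the Lie derivative along X of the embedding of the regular distribution u is associated to the embedding of the distributional Lie derivative L_X u. -/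
open MeasureTheory Filter Topology

noncomputable section

namespace Colombeau

/-! Write `ũ(φ, x) = ∫ u(y) φ(y - x) dy`. By integration by parts, it is enough to show the weak
convergence `∫ ũ(φ_ε, x) g(x) dx → ∫ u g` for `g = div (Ψ X)`. The substitution `x ↦ y - x`
exchanges `φ` and `g` in the double integral of `u(y) φ(y - x) g(x)`, so that
`∫ ũ(φ_ε, x) g(x) dx = ∫ φ_ε(x) ũ(g, x) dx`. As `ũ(g, ·)` is continuous, the right-hand side
converges to `ũ(g, 0) = ∫ u g`. -/

section Regularization

open ContinuousLinearMap
open scoped Convolution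

/-- The function `ũ(φ, ·)`, the representative at `φ` of the embedding of the regular distribution
`u`. It is the convolution of `u` with the reflection of `φ`, and `μ` is Lebesgue measure in the
application. -/
def regularization {G : Type*} [Sub G] [MeasurableSpace G] (μ : Measure G) (u φ : G → ℝ) :
    G → ℝ :=
  fun x => ∫ y, u y * φ (y - x) ∂μ

theorem regularization_eq_convolution {G : Type*} [AddGroup G] [MeasurableSpace G]
    (μ : Measure G) (u φ : G → ℝ) :
    regularization μ u φ = u ⋆[mul ℝ ℝ, μ] fun v => φ (-v) := by
  ext x
  simp [regularization, convolution_def]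

theorem regularization_apply_zero {G : Type*} [AddGroup G] [MeasurableSpace G]
    (μ : Measure G) (u φ : G → ℝ) : regularization μ u φ 0 = ∫ y, u y * φ y ∂μ := by
  simp [regularization]

variable {G : Type*} [AddCommGroup G] [TopologicalSpace G] [IsTopologicalAddGroup G]
  [MeasurableSpace G] [BorelSpace G] {μ : Measure G} {u φ g : G → ℝ}

theorem continuous_regularization (hu : LocallyIntegrable u μ) (hφ : Continuous φ)
    (hφc : HasCompactSupport φ) : Continuous (regularization μ u φ) := by
  rw [regularization_eq_convolution]
  exact (hφc.comp_homeomorph (Homeomorph.neg G)).continuous_convolution_right _ hu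
    (hφ.comp continuous_neg)

theorem convolution_mul_comm [μ.IsAddLeftInvariant] [μ.IsNegInvariant] (f g : G → ℝ) :
    f ⋆[mul ℝ ℝ, μ] g = g ⋆[mul ℝ ℝ, μ] f := by
  rw [← convolution_flip, flip_mul]

variable [T2Space G] [SecondCountableTopology G] [SFinite μ] [IsLocallyFiniteMeasure μ]
  [μ.IsAddLeftInvariant]

theorem convolution_mul_assoc (hu : LocallyIntegrable u μ) (hφ : Continuous φ)
    (hφc : HasCompactSupport φ) (hg : Continuous g) (hgc : HasCompactSupport g) (x : G) :
    ((u ⋆[mul ℝ ℝ, μ] φ) ⋆[mul ℝ ℝ, μ] g) x = (u ⋆[mul ℝ ℝ, μ] (φ ⋆[mul ℝ ℝ, μ] g)) x :=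
  convolution_assoc _ _ _ _ (fun _ _ _ => mul_assoc _ _ _)
    hu.aestronglyMeasurable hφ.aestronglyMeasurable hg.aestronglyMeasurable
    (.of_forall (hφc.convolutionExists_right _ hu hφ))
    (.of_forall (hgc.norm.convolutionExists_right _ hφ.norm.locallyIntegrable hg.norm))
    ((hφc.norm.convolution _ hgc.norm).convolutionExists_right _ (fun y => (hu y).norm)
      (hgc.norm.continuous_convolution_right _ hφ.norm.locallyIntegrable hg.norm) x)

theorem integral_regularization_mul [μ.IsNegInvariant] (hu : LocallyIntegrable u μ)
    (hφ : Continuous φ) (hφc : HasCompactSupport φ) (hg : Continuous g)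
    (hgc : HasCompactSupport g) :
    ∫ x, regularization μ u φ x * g x ∂μ = ∫ x, φ x * regularization μ u g x ∂μ := by
  have integral_mul_eq (v f : G → ℝ) :
      ∫ x, v x * f x ∂μ = (v ⋆[mul ℝ ℝ, μ] fun t => f (-t)) 0 := by simp [convolution_def]
  have hφ' : Continuous fun v => φ (-v) := hφ.comp continuous_neg
  have hφc' : HasCompactSupport fun v => φ (-v) := hφc.comp_homeomorph (.neg G)
  have hg' : Continuous fun v => g (-v) := hg.comp continuous_neg
  have hgc' : HasCompactSupport fun v => g (-v) := hgc.comp_homeomorph (.neg G)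
  simp_rw [mul_comm (φ _), integral_mul_eq, regularization_eq_convolution]
  rw [convolution_mul_assoc hu hφ' hφc' hg' hgc', convolution_mul_comm fun v => φ (-v),
    convolution_mul_assoc hu hg' hgc' hφ' hφc']

theorem contDiff_regularization {E : Type*} [NormedAddCommGroup E] [NormedSpace ℝ E]
    [MeasurableSpace E] [BorelSpace E] {μ : Measure E} [SFinite μ] [μ.IsAddLeftInvariant]
    {u φ : E → ℝ} {k : ℕ∞} (hu : LocallyIntegrable u μ) (hφ : ContDiff ℝ k φ)
    (hφc : HasCompactSupport φ) : ContDiff ℝ k (regularization μ u φ) := by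
  rw [regularization_eq_convolution]
  exact (hφc.comp_homeomorph (Homeomorph.neg E)).contDiff_convolution_right _ hu
    (hφ.comp contDiff_neg)

end Regularization

section Mollifier

variable {n : ℕ} {φ : (Fin n → ℝ) → ℝ}

theorem contDiff_scaled {k : WithTop ℕ∞} (hφ : ContDiff ℝ k φ) (ε : ℝ) :
    ContDiff ℝ k (scaled n φ ε) := by
  unfold scaled
  fun_prop

theorem hasCompactSupport_scaled (hφ : HasCompactSupport φ) {ε : ℝ} (hε : ε ≠ 0) :
    HasCompactSupport (scaled n φ ε) :=
  (hφ.comp_smul (inv_ne_zero hε)).mul_left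

theorem integral_scaled_mul (φ f : (Fin n → ℝ) → ℝ) {ε : ℝ} (hε : 0 < ε) :
    ∫ x, scaled n φ ε x * f x = ∫ w, φ w * f (ε • w) := by
  calc ∫ x, scaled n φ ε x * f x
      = (ε ^ n)⁻¹ * ∫ x, φ (ε⁻¹ • x) * f (ε • ε⁻¹ • x) := by
        simp [scaled, mul_assoc, integral_const_mul, smul_inv_smul₀ hε.ne']
    _ = ∫ w, φ w * f (ε • w) := by
        rw [Measure.integral_comp_inv_smul_of_nonneg volume (fun w => φ w * f (ε • w)) hε.le,
          Module.finrank_fin_fun, smul_eq_mul, inv_mul_cancel_left₀ (pow_pos hε n).ne']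

theorem tendsto_integral_scaled_mul (hφ : Continuous φ) (hφc : HasCompactSupport φ)
    {f : (Fin n → ℝ) → ℝ} (hf : Continuous f) :
    Tendsto (fun ε => ∫ x, scaled n φ ε x * f x) (𝓝[>] 0) (𝓝 ((∫ x, φ x) * f 0)) := by
  have hcont : Continuous fun ε : ℝ => ∫ w, φ w * f (ε • w) := by
    have hset (ε : ℝ) : ∫ w, φ w * f (ε • w) = ∫ w in tsupport φ, φ w * f (ε • w) :=
      (setIntegral_eq_integral_of_forall_compl_eq_zero fun w hw => by
        rw [image_eq_zero_of_notMem_tsupport hw, zero_mul]).symm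
    simp_rw [hset]
    exact continuous_parametric_integral_of_continuous (by fun_prop) hφc.isCompact
  have hlim : Tendsto (fun ε : ℝ => ∫ w, φ w * f (ε • w)) (𝓝[>] 0) (𝓝 ((∫ x, φ x) * f 0)) := by
    simpa [integral_mul_const] using (hcont.tendsto 0).mono_left nhdsWithin_le_nhds
  refine hlim.congr' ?_
  filter_upwards [self_mem_nhdsWithin] with ε hε
  exact (integral_scaled_mul φ f hε).symm

theorem tendsto_integral_regularization_scaled_mul {u g : (Fin n → ℝ) → ℝ}
    (hu : LocallyIntegrable u) (hφ : Continuous φ) (hφc : HasCompactSupport φ)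
    (hg : Continuous g) (hgc : HasCompactSupport g) :
    Tendsto (fun ε => ∫ x, regularization volume u (scaled n φ ε) x * g x) (𝓝[>] 0)
      (𝓝 ((∫ x, φ x) * ∫ x, u x * g x)) := by
  rw [← regularization_apply_zero]
  refine (tendsto_integral_scaled_mul hφ hφc (continuous_regularization hu hg hgc)).congr' ?_
  filter_upwards [self_mem_nhdsWithin] with ε (hε : 0 < ε)
  exact (integral_regularization_mul hu (contDiff_scaled (contDiff_zero.2 hφ) ε).continuous
    (hasCompactSupport_scaled hφc hε.ne') hg hgc).symm

end Mollifier

section LieDerivative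

theorem integrable_mul_of_hasCompactSupport {α : Type*} [TopologicalSpace α] [MeasurableSpace α]
    [OpensMeasurableSpace α] {μ : Measure α} [IsFiniteMeasureOnCompacts μ] {f g : α → ℝ}
    (hf : Continuous f) (hg : Continuous g) (hgc : HasCompactSupport g) :
    Integrable (fun x => f x * g x) μ :=
  (hf.mul hg).integrable_of_hasCompactSupport hgc.mul_left

variable {n : ℕ}

/-- The Lie derivative `∑ₐ Xₐ ∂ₐv` of a function `v` along a vector field `X`. -/
def lieDerivative (X : (Fin n → ℝ) → (Fin n → ℝ)) (v : (Fin n → ℝ) → ℝ) : (Fin n → ℝ) → ℝ :=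
  fun x => ∑ a, X x a * partialD a v x

/-- The divergence `∑ₐ ∂ₐYₐ` of a vector field `Y`. The distributional Lie derivative along `X`
pairs with a test function `Ψ` through the divergence of `Ψ X`. -/
def divergence (Y : (Fin n → ℝ) → (Fin n → ℝ)) : (Fin n → ℝ) → ℝ :=
  fun x => ∑ a, partialD a (fun z => Y z a) x

theorem continuous_partialD (a : Fin n) {f : (Fin n → ℝ) → ℝ} (hf : ContDiff ℝ 1 f) :
    Continuous (partialD a f) :=
  (hf.continuous_fderiv one_ne_zero).clm_apply continuous_const

theorem hasCompactSupport_partialD_s12 (a : Fin n) {f : (Fin n → ℝ) → ℝ}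
    (hf : HasCompactSupport f) : HasCompactSupport (partialD a f) :=
  hf.fderiv_apply ℝ _

theorem integral_mul_partialD {f g : (Fin n → ℝ) → ℝ} (a : Fin n) (hf : ContDiff ℝ 1 f)
    (hg : ContDiff ℝ 1 g) (hgc : HasCompactSupport g) :
    ∫ x, g x * partialD a f x = -∫ x, f x * partialD a g x := by
  rw [eq_comm, neg_eq_iff_eq_neg]
  simp_rw [mul_comm (g _)]
  exact integral_mul_fderiv_eq_neg_fderiv_mul_of_integrable
    (integrable_mul_of_hasCompactSupport (continuous_partialD a hf) hg.continuous hgc)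
    (integrable_mul_of_hasCompactSupport hf.continuous (continuous_partialD a hg)
      (hasCompactSupport_partialD_s12 a hgc))
    (integrable_mul_of_hasCompactSupport hf.continuous hg.continuous hgc)
    (fun x _ => hf.differentiable one_ne_zero x) (fun x _ => hg.differentiable one_ne_zero x)

variable {Y : (Fin n → ℝ) → (Fin n → ℝ)}

theorem continuous_divergence (hY : ContDiff ℝ 1 Y) : Continuous (divergence Y) :=
  continuous_finsetSum _ fun a _ => continuous_partialD a (contDiff_pi.1 hY a)

theorem hasCompactSupport_divergence (hY : HasCompactSupport Y) :
    HasCompactSupport (divergence Y) := by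
  refine .intro' hY.isCompact (isClosed_tsupport Y) fun x hx => Finset.sum_eq_zero fun a _ => ?_
  have hsub : tsupport (partialD a fun z => Y z a) ⊆ tsupport Y :=
    (tsupport_fderiv_apply_subset ℝ _).trans (tsupport_comp_subset (g := Function.eval a) rfl Y)
  exact image_eq_zero_of_notMem_tsupport (Set.notMem_subset hsub hx)

theorem integral_lieDerivative_eq_neg_integral_mul_divergence {v : (Fin n → ℝ) → ℝ}
    (hv : ContDiff ℝ 1 v) (hY : ContDiff ℝ 1 Y) (hYc : HasCompactSupport Y) :
    ∫ x, lieDerivative Y v x = -∫ x, v x * divergence Y x := by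
  have hYa (a : Fin n) : ContDiff ℝ 1 fun x => Y x a := contDiff_pi.1 hY a
  have hYac (a : Fin n) : HasCompactSupport fun x => Y x a :=
    hYc.comp_left (g := Function.eval a) rfl
  calc ∫ x, lieDerivative Y v x
      = ∑ a, ∫ x, Y x a * partialD a v x := by
        refine integral_finsetSum _ fun a _ => ?_
        simpa only [mul_comm] using integrable_mul_of_hasCompactSupport
          (continuous_partialD a hv) (hYa a).continuous (hYac a)
    _ = -∑ a, ∫ x, v x * partialD a (fun z => Y z a) x := by
        simp_rw [integral_mul_partialD _ hv (hYa _) (hYac _), Finset.sum_neg_distrib]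
    _ = -∫ x, v x * divergence Y x := by
        simp_rw [divergence, Finset.mul_sum]
        rw [integral_finsetSum _ fun a _ => integrable_mul_of_hasCompactSupport hv.continuous
          (continuous_partialD a (hYa a)) (hasCompactSupport_partialD_s12 a (hYac a))]

end LieDerivative

theorem lie_derivative_associated_general {n : ℕ} {u : (Fin n → ℝ) → ℝ}
    (hu : LocallyIntegrable u) {X : (Fin n → ℝ) → (Fin n → ℝ)} (hX : ContDiff ℝ 1 X)
    {φ : (Fin n → ℝ) → ℝ} (hφ : ContDiff ℝ 1 φ) (hφc : HasCompactSupport φ)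
    (hφ1 : ∫ x, φ x = 1) {Ψ : (Fin n → ℝ) → ℝ} (hΨ : ContDiff ℝ 1 Ψ)
    (hΨc : HasCompactSupport Ψ) :
    Tendsto (fun ε => ∫ x, lieDerivative X (regularization volume u (scaled n φ ε)) x * Ψ x)
      (𝓝[>] 0) (𝓝 (-∫ x, u x * divergence (fun z a => X z a * Ψ z) x)) := by
  let Y : (Fin n → ℝ) → (Fin n → ℝ) := fun z a => X z a * Ψ z
  have hY : ContDiff ℝ 1 Y := contDiff_pi.2 fun a => (contDiff_pi.1 hX a).mul hΨ
  have hYc : HasCompactSupport Y := hΨc.mono fun x => mt fun hx => by ext; simp [Y, hx]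
  have hweak := tendsto_integral_regularization_scaled_mul hu hφ.continuous hφc
    (continuous_divergence hY) (hasCompactSupport_divergence hYc)
  rw [hφ1, one_mul] at hweak
  refine hweak.neg.congr' ?_
  filter_upwards [self_mem_nhdsWithin] with ε (hε : 0 < ε)
  have hsmooth : ContDiff ℝ 1 (regularization volume u (scaled n φ ε)) :=
    contDiff_regularization (k := 1) hu (contDiff_scaled hφ ε)
      (hasCompactSupport_scaled hφc hε.ne')
  rw [← integral_lieDerivative_eq_neg_integral_mul_divergence hsmooth hY hYc]
  congr! 2 with x
  simp only [lieDerivative, Y, Finset.sum_mul, mul_right_comm]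

/-- the Lie derivative along a smooth vector field `X` of the embedding
of a regular distribution `u` is associated to the embedding of the distributional
Lie derivative `L_X u`. -/
theorem lie_derivative_associated (n : ℕ) (u : (Fin n → ℝ) → ℝ)
    (hu : LocallyIntegrable u) (X : (Fin n → ℝ) → (Fin n → ℝ)) (hX : ContDiff ℝ (⊤ : ℕ∞) X)
    (φ : (Fin n → ℝ) → ℝ) (hφ : IsA0 n φ)
    (Ψ : (Fin n → ℝ) → ℝ) (hΨ : IsTestFunction n Ψ) :
    Tendsto (fun ε : ℝ => ∫ x,
        (∑ a, X x a * partialD a (fun z => ∫ y, u y * scaled n φ ε (y - z)) x) * Ψ x)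
      (𝓝[>] 0) (𝓝 (-∫ x, u x * ∑ a, partialD a (fun z => X z a * Ψ z) x)) := by
  have hone : (1 : WithTop ℕ∞) ≤ (⊤ : ℕ∞) := mod_cast le_top
  exact lie_derivative_associated_general hu (hX.of_le hone) (hφ.1.1.of_le hone) hφ.1.2 hφ.2
    (hΨ.1.of_le hone) hΨ.2

end Colombeau
end
end
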